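/- Optimal posterior convergence for the spike and Cauchy slab: there exist constants C > 0, N_0 > 0 and c_0, c_1 > 0 such that, for any n ≥ N_0 and any s_n satisfying c_1·log²n ≤ s_n ≤ c_0·n, sup_{θ_0 ∈ ℓ0[s_n]} E_{θ_0} ∫ ‖θ − θ_0‖² dΠ_{ĥα}(θ | X) ≤ C · 2·s_n·log(n/s_n). Moreover, if one only assumes s_n ≤ c_0·n, the same statement holds with the bound replaced by C·2·s_n·log(n/s_n) + C·log³n. -/

import Mathlib

/-!
Statement 2: optimal posterior convergence rate for the empirical Bayes
spike and Cauchy slab posterior.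
-/

open MeasureTheory Real Set

noncomputable section

/-- Standard Cauchy density. -/
def cauchyDen (x : ℝ) : ℝ := (Real.pi * (1 + x ^ 2))⁻¹


/-- Standard normal density. -/
def phi (x : ℝ) : ℝ := Real.exp (-x ^ 2 / 2) / Real.sqrt (2 * Real.pi)

/-- Standard Laplace density. -/
def lapDen (x : ℝ) : ℝ := Real.exp (-|x|) / 2

/-- Convolution `g = φ * γ`. -/
def conv (γ : ℝ → ℝ) (x : ℝ) : ℝ := ∫ u, phi (x - u) * γ u

/-- Posterior weight `a(x) = α g(x) / ((1-α) φ(x) + α g(x))`. -/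
def aWt (γ : ℝ → ℝ) (α x : ℝ) : ℝ :=
  α * conv γ x / ((1 - α) * phi x + α * conv γ x)

/-- Density of the single-coordinate posterior with respect to `volume + δ₀`:
the point mass `1 - a(x)` at `0`, and the continuous part `a(x) γ_x`. -/
def coordDen (γ : ℝ → ℝ) (α x u : ℝ) : ℝ :=
  if u = 0 then 1 - aWt γ α x else aWt γ α x * (phi (x - u) * γ u / conv γ x)

/-- Single-coordinate posterior `(1 - a(x)) δ₀ + a(x) G_x`. -/
def coordPost (γ : ℝ → ℝ) (α x : ℝ) : Measure ℝ :=
  (volume + Measure.dirac (0 : ℝ)).withDensity fun u => ENNReal.ofReal (coordDen γ α x u)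

/-- The spike and slab posterior `Π_α[· | X]` on `ℝⁿ`, for a fixed weight `α`. -/
def post (γ : ℝ → ℝ) (n : ℕ) (α : ℝ) (X : Fin n → ℝ) : Measure (Fin n → ℝ) :=
  Measure.pi fun i => coordPost γ α (X i)

/-- Law `P_θ` of the data `X`, `X_i = θ_i + ε_i` with `ε_i` i.i.d. `N(0,1)`. -/
def Pdata (n : ℕ) (θ : Fin n → ℝ) : Measure (Fin n → ℝ) :=
  Measure.pi fun i => ProbabilityTheory.gaussianReal (θ i) 1

/-- The class `ℓ₀[s]` of `s`-sparse vectors. -/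
def ell0 (n s : ℕ) : Set (Fin n → ℝ) := {θ | Nat.card {i : Fin n // θ i ≠ 0} ≤ s}

/-- Log-marginal likelihood `ℓ_n(α; X)`. -/
def logMarg (γ : ℝ → ℝ) {n : ℕ} (α : ℝ) (X : Fin n → ℝ) : ℝ :=
  ∑ i, Real.log ((1 - α) * phi (X i) + α * conv γ (X i))

/-- `0` is a median of the single-coordinate posterior distribution. -/
def medianZero (γ : ℝ → ℝ) (α x : ℝ) : Prop :=
  2⁻¹ ≤ coordPost γ α x (Set.Iic 0) ∧ 2⁻¹ ≤ coordPost γ α x (Set.Ici 0)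

/-- `t` is the posterior median threshold function: for each `α ∈ (0,1)`,
`t α > 0` and the posterior median at observation `x` is `0` iff `|x| ≤ t α`. -/
def IsThreshold (γ : ℝ → ℝ) (t : ℝ → ℝ) : Prop :=
  ∀ α ∈ Set.Ioo (0 : ℝ) 1, 0 < t α ∧ ∀ x : ℝ, (medianZero γ α x ↔ |x| ≤ t α)

/-- `hahat` is a marginal maximum likelihood empirical Bayes estimator of `α`,
with maximisation restricted to `[αn, 1]`. -/
def IsMMLE (γ : ℝ → ℝ) {n : ℕ} (αn : ℝ) (hahat : (Fin n → ℝ) → ℝ) : Prop :=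
  Measurable hahat ∧ ∀ X : Fin n → ℝ, hahat X ∈ Set.Icc αn 1 ∧
    ∀ α ∈ Set.Icc αn 1, logMarg γ α X ≤ logMarg γ (hahat X) X

/-- Expected posterior squared `L²`-moment
`E_{θ₀} ∫ ‖θ - θ₀‖² dΠ_{ĥα}(θ | X)` for the plug-in posterior. -/
def postRisk (γ : ℝ → ℝ) {n : ℕ} (hahat : (Fin n → ℝ) → ℝ) (θ0 : Fin n → ℝ) : ℝ :=
  ∫ X, (∫ θ, (∑ i, (θ i - θ0 i) ^ 2) ∂(post γ n (hahat X) X)) ∂(Pdata n θ0)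

/-!
The posterior loss is a sum over coordinates, and `ĥα` enters only through the fact that it is at
least as likely as suitable competitors. Write `r = s / n`.

* Coordinates with `θ i ≠ 0`. The competitor `max ĥα r` costs at most `2 r` per coordinate in
  log-likelihood, while it would gain about `X i ^ 2 / 4 - log (1 / r)` at every large observation
  still attributed to the spike. So the loss from shrinking signals to `0` is of order
  `s log (n / s)`.
* Coordinates with `θ i = 0`. Fix a cut-off `α` of order `r √log (1 / r)`. If `ĥα ≤ 2 α`, the
  loss has mean of order `α √log (1 / r)`. If `ĥα ≥ 2 α`, concavity of the log-marginal likelihood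
  makes the likelihood ratio of the weight `2 α` to the weight `α` at least `1`. Each zero
  coordinate multiplies the mean of that ratio by at most `exp (-4 r)`, so this event contributes
  only a bounded amount.

The competitor `α` is admissible as soon as `αn ≤ r`, and a threshold of at least `√(2 log n)`
forces `αn ≤ log n ^ 2 / n`. Smaller `s` are handled by replacing `s` with `⌈log n ^ 2⌉`.
-/

open ProbabilityTheory Filter Topology
open scoped Convolution Finset NNReal

/-! ### The standard normal density -/

lemma phi_pos (x : ℝ) : 0 < phi x := by
  unfold phi
  positivity

lemma continuous_phi : Continuous phi := by
  unfold phi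
  fun_prop

lemma phi_le_exp (x : ℝ) : phi x ≤ exp (-x ^ 2 / 2) :=
  div_le_self (exp_pos _).le (one_le_sqrt.2 (by linarith [pi_gt_three]))

lemma phi_sub_eq_gaussianPDFReal (x u : ℝ) : phi (x - u) = gaussianPDFReal x 1 u := by
  rw [phi, gaussianPDFReal, ← neg_sub u x, neg_sq]
  simp [div_eq_inv_mul]

lemma hasDerivAt_phi_sub (x u : ℝ) :
    HasDerivAt (fun u ↦ phi (x - u)) (-((u - x) * phi (x - u))) u := by
  have h : HasDerivAt (fun u : ℝ ↦ -(x - u) ^ 2 / 2) (-(u - x)) u := by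
    simpa [neg_div] using (((hasDerivAt_id' u).const_sub x).fun_pow 2).fun_neg.div_const 2
  exact (h.exp.div_const √(2 * π)).congr_deriv (by rw [phi]; ring)

section Normal

variable (x : ℝ) (f : ℝ → ℝ)

lemma integral_gaussianReal_eq_integral_phi :
    ∫ u, f u ∂gaussianReal x 1 = ∫ u, phi (x - u) * f u := by
  simp_rw [integral_gaussianReal_eq_integral_smul one_ne_zero, phi_sub_eq_gaussianPDFReal,
    smul_eq_mul]

lemma integral_gaussianReal_zero_eq_integral_phi :
    ∫ u, f u ∂gaussianReal 0 1 = ∫ u, phi u * f u := by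
  simp only [integral_gaussianReal_eq_integral_phi, zero_sub, phi, neg_sq]

lemma integrable_gaussianReal_iff :
    Integrable f (gaussianReal x 1) ↔ Integrable (fun u ↦ phi (x - u) * f u) := by
  rw [gaussianReal_of_var_ne_zero _ one_ne_zero,
    integrable_withDensity_iff_integrable_smul' (measurable_gaussianPDF _ _)
      (.of_forall fun _ ↦ gaussianPDF_lt_top)]
  simp only [toReal_gaussianPDF, phi_sub_eq_gaussianPDFReal, smul_eq_mul]

lemma integrable_gaussianReal_zero_iff :
    Integrable f (gaussianReal 0 1) ↔ Integrable (fun u ↦ phi u * f u) := by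
  simp only [integrable_gaussianReal_iff, zero_sub, phi, neg_sq]

lemma integrable_phi : Integrable phi := by
  simpa using (integrable_gaussianReal_zero_iff fun _ ↦ 1).1 (integrable_const 1)

lemma integral_phi : ∫ u, phi u = 1 := by
  simpa using (integral_gaussianReal_zero_eq_integral_phi fun _ ↦ 1).symm

lemma integrable_sub_pow_gaussianReal (k : ℕ) :
    Integrable (fun u ↦ (u - x) ^ k) (gaussianReal x 1) := by
  have h := ((memLp_id_gaussianReal (μ := x) (v := 1) k).sub (memLp_const x)).integrable_norm_pow'
  rw [← integrable_norm_iff (by fun_prop)]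
  simpa using h

-- Stein's identity for `u ↦ (u - x) ^ (k + 1)`.
lemma integral_sub_pow_add_two_gaussianReal (k : ℕ) :
    ∫ u, (u - x) ^ (k + 2) ∂gaussianReal x 1 = (k + 1) * ∫ u, (u - x) ^ k ∂gaussianReal x 1 := by
  have hint (j : ℕ) : Integrable fun u ↦ phi (x - u) * (u - x) ^ j :=
    (integrable_gaussianReal_iff x _).1 (integrable_sub_pow_gaussianReal x j)
  have hpow (u : ℝ) : HasDerivAt (fun u ↦ (u - x) ^ (k + 1)) ((k + 1) * (u - x) ^ k) u := by
    simpa using ((hasDerivAt_id' u).sub_const x).fun_pow (k + 1)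
  have parts := integral_mul_deriv_eq_deriv_mul_of_integrable (fun u _ ↦ hpow u)
    (fun u _ ↦ hasDerivAt_phi_sub x u)
    ((hint (k + 2)).neg.congr (.of_forall fun u ↦ by simp only [Pi.neg_apply, Pi.mul_apply]; ring))
    (((hint k).const_mul (k + 1)).congr (.of_forall fun u ↦ by simp only [Pi.mul_apply]; ring))
    ((hint (k + 1)).congr (.of_forall fun u ↦ by simp only [Pi.mul_apply]; ring))
  calc ∫ u, (u - x) ^ (k + 2) ∂gaussianReal x 1
      = -∫ u, (u - x) ^ (k + 1) * -((u - x) * phi (x - u)) := by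
        rw [integral_gaussianReal_eq_integral_phi, ← integral_neg]
        exact integral_congr_ae (.of_forall fun u ↦ by ring)
    _ = ∫ u, (k + 1) * (u - x) ^ k * phi (x - u) := by rw [parts, neg_neg]
    _ = (k + 1) * ∫ u, (u - x) ^ k ∂gaussianReal x 1 := by
        rw [integral_gaussianReal_eq_integral_phi, ← integral_const_mul]
        exact integral_congr_ae (.of_forall fun u ↦ by ring)

lemma integral_sub_sq_gaussianReal : ∫ u, (u - x) ^ 2 ∂gaussianReal x 1 = 1 := by
  simpa using integral_sub_pow_add_two_gaussianReal x 0

lemma integral_sub_pow_four_gaussianReal : ∫ u, (u - x) ^ 4 ∂gaussianReal x 1 = 3 := by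
  rw [integral_sub_pow_add_two_gaussianReal x 2, integral_sub_sq_gaussianReal]
  norm_num

lemma integral_sq_gaussianReal (v : ℝ≥0) : ∫ u, u ^ 2 ∂gaussianReal x v = v + x ^ 2 := by
  have h := variance_eq_sub (memLp_id_gaussianReal (μ := x) (v := v) 2)
  simp only [variance_id_gaussianReal, Pi.pow_apply, id_eq, integral_id_gaussianReal] at h
  linarith

end Normal

/-! ### Slab densities with Cauchy tails -/

/-- Slab densities bounded above and below by multiples of the Cauchy density; this is all
that the argument uses about the slab. -/
structure HasCauchyTails (γ : ℝ → ℝ) (K : ℝ) : Prop where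
  measurable : Measurable γ
  integral_eq_one : ∫ u, γ u = 1
  const_pos : 0 < K
  lower (u : ℝ) : (K * (1 + u ^ 2))⁻¹ ≤ γ u
  upper (u : ℝ) : γ u ≤ K / (1 + u ^ 2)

lemma hasCauchyTails_cauchyDen : HasCauchyTails cauchyDen π where
  measurable := by
    unfold cauchyDen
    fun_prop
  integral_eq_one := by
    simp only [cauchyDen, mul_inv, integral_const_mul, integral_univ_inv_one_add_sq]
    exact inv_mul_cancel₀ pi_ne_zero
  const_pos := pi_pos
  lower _ := le_rfl
  upper u := by
    rw [cauchyDen, mul_inv, ← div_eq_mul_inv]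
    gcongr
    exact (inv_le_one_of_one_le₀ (by linarith [pi_gt_three])).trans (by linarith [pi_gt_three])

lemma conv_eq_integral_gaussianReal (γ : ℝ → ℝ) (x : ℝ) :
    conv γ x = ∫ u, γ u ∂gaussianReal x 1 :=
  (integral_gaussianReal_eq_integral_phi x γ).symm

lemma conv_eq_convolution (γ : ℝ → ℝ) :
    conv γ = γ ⋆[ContinuousLinearMap.mul ℝ ℝ] phi := by
  ext x
  simp only [conv, convolution_def, ContinuousLinearMap.mul_apply', mul_comm]

lemma measurable_conv {γ : ℝ → ℝ} (hγ : Measurable γ) : Measurable (conv γ) := by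
  have h : Measurable fun p : ℝ × ℝ ↦ phi (p.1 - p.2) * γ p.2 :=
    (continuous_phi.measurable.comp (measurable_fst.sub measurable_snd)).mul
      (hγ.comp measurable_snd)
  exact h.stronglyMeasurable.integral_prod_right.measurable

namespace HasCauchyTails

variable {γ : ℝ → ℝ} {K : ℝ} (h : HasCauchyTails γ K)
include h

lemma pos (u : ℝ) : 0 < γ u :=
  (inv_pos.2 (mul_pos h.const_pos (by positivity))).trans_le (h.lower u)

lemma le_const (u : ℝ) : γ u ≤ K :=
  (h.upper u).trans (div_le_self h.const_pos.le (by nlinarith))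

lemma one_le_const : 1 ≤ K := by
  have h0 : K⁻¹ ≤ K := by simpa using (h.lower 0).trans (h.upper 0)
  by_contra! hK
  exact (h0.trans_lt hK).not_ge (one_le_inv_iff₀.2 ⟨h.const_pos, hK.le⟩)

lemma integrable : Integrable γ := .of_integral_ne_zero (by simp [h.integral_eq_one])

lemma integrable_gaussianReal (x : ℝ) : Integrable γ (gaussianReal x 1) :=
  .of_bound h.measurable.aestronglyMeasurable K <| .of_forall fun u ↦ by
    rw [norm_of_nonneg (h.pos u).le]
    exact h.le_const u

lemma integrable_conv : Integrable (conv γ) := by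
  rw [conv_eq_convolution]
  exact h.integrable.integrable_convolution _ integrable_phi

lemma integral_conv : ∫ x, conv γ x = 1 := by
  rw [conv_eq_convolution, integral_convolution _ h.integrable integrable_phi]
  simp [h.integral_eq_one, integral_phi]

-- Jensen's inequality for `t ↦ t⁻¹` and the variable `1 + U²`, `U ∼ N(x, 1)`.
lemma inv_le_conv (x : ℝ) : (K * (2 + x ^ 2))⁻¹ ≤ conv γ x := by
  have hsq : Integrable (fun u : ℝ ↦ u ^ 2) (gaussianReal x 1) := by
    simpa using (memLp_id_gaussianReal 2).integrable_sq
  have hinv : Integrable (fun u : ℝ ↦ (1 + u ^ 2)⁻¹) (gaussianReal x 1) :=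
    .of_bound (by fun_prop) 1 <| .of_forall fun u ↦ by
      rw [norm_of_nonneg (by positivity)]
      exact inv_le_one_of_one_le₀ (by nlinarith)
  have hconvex : ConvexOn ℝ (Ici (1 : ℝ)) fun t ↦ t⁻¹ := by
    simpa only [zpow_neg_one] using
      (convexOn_zpow (-1)).subset (Ici_subset_Ioi.2 one_pos) (convex_Ici 1)
  have jensen : (∫ u, (1 + u ^ 2) ∂gaussianReal x 1)⁻¹
      ≤ ∫ u, (1 + u ^ 2)⁻¹ ∂gaussianReal x 1 :=
    hconvex.map_integral_le
      (continuousOn_inv₀.mono fun t ht ↦ (one_pos.trans_le ht).ne')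
      isClosed_Ici (.of_forall fun u ↦ by simp [sq_nonneg]) ((integrable_const 1).add hsq) hinv
  have hmean : ∫ u, (1 + u ^ 2) ∂gaussianReal x 1 = 2 + x ^ 2 := by
    rw [integral_add (integrable_const 1) hsq, integral_sq_gaussianReal]
    simp only [integral_const, probReal_univ, one_smul, NNReal.coe_one]
    ring
  calc (K * (2 + x ^ 2))⁻¹ = K⁻¹ * (2 + x ^ 2)⁻¹ := mul_inv _ _
    _ ≤ K⁻¹ * ∫ u, (1 + u ^ 2)⁻¹ ∂gaussianReal x 1 := by
        rw [← hmean]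
        exact mul_le_mul_of_nonneg_left jensen (inv_nonneg.2 h.const_pos.le)
    _ ≤ conv γ x := by
        rw [conv_eq_integral_gaussianReal, ← integral_const_mul]
        exact integral_mono (hinv.const_mul _) (h.integrable_gaussianReal x) fun u ↦ by
          simpa only [mul_inv] using h.lower u

lemma conv_pos (x : ℝ) : 0 < conv γ x :=
  (inv_pos.2 (mul_pos h.const_pos (by positivity))).trans_le (h.inv_le_conv x)

lemma exp_mul_phi_le_conv (x : ℝ) : exp (x ^ 2 / 4) / (4 * K) * phi x ≤ conv γ x := by
  have hK := h.const_pos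
  have hexp : exp (-x ^ 2 / 2) = (exp (x ^ 2 / 4) ^ 2)⁻¹ := by
    rw [← exp_nat_mul, ← exp_neg]
    push_cast
    ring_nf
  have hlin := add_one_le_exp (x ^ 2 / 4)
  calc exp (x ^ 2 / 4) / (4 * K) * phi x
      ≤ exp (x ^ 2 / 4) / (4 * K) * exp (-x ^ 2 / 2) := by
        gcongr
        exact phi_le_exp x
    _ = (K * (4 * exp (x ^ 2 / 4)))⁻¹ := by
        rw [hexp]
        field_simp
    _ ≤ (K * (2 + x ^ 2))⁻¹ := by
        gcongr
        linarith
    _ ≤ conv γ x := h.inv_le_conv x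

end HasCauchyTails

/-! ### The posterior of one coordinate -/

/-- Marginal density of one observation under the spike and slab prior with weight `α`. -/
def margDen (γ : ℝ → ℝ) (α x : ℝ) : ℝ := (1 - α) * phi x + α * conv γ x

/-- The law `G_x`: posterior of one coordinate given that it is drawn from the slab. -/
def slabPost (γ : ℝ → ℝ) (x : ℝ) : Measure ℝ :=
  (gaussianReal x 1).withDensity fun u ↦ ENNReal.ofReal (γ u / conv γ x)

section Coordinate

variable {γ : ℝ → ℝ} {α x : ℝ}

lemma margDen_pos (hα : α ∈ Icc 0 1) (hg : 0 < conv γ x) : 0 < margDen γ α x := by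
  rcases hα.1.eq_or_lt with rfl | h0
  · simpa [margDen] using phi_pos x
  · exact add_pos_of_nonneg_of_pos (mul_nonneg (sub_nonneg.2 hα.2) (phi_pos x).le) (mul_pos h0 hg)

lemma one_sub_aWt (hα : α ∈ Icc 0 1) (hg : 0 < conv γ x) :
    1 - aWt γ α x = (1 - α) * phi x / margDen γ α x := by
  rw [aWt, ← margDen, one_sub_div (margDen_pos hα hg).ne']
  simp [margDen]

lemma aWt_mem_Icc (hα : α ∈ Icc 0 1) (hg : 0 < conv γ x) : aWt γ α x ∈ Icc 0 1 := by
  constructor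
  · exact div_nonneg (mul_nonneg hα.1 hg.le) (margDen_pos hα hg).le
  · rw [← sub_nonneg, one_sub_aWt hα hg]
    exact div_nonneg (mul_nonneg (sub_nonneg.2 hα.2) (phi_pos x).le) (margDen_pos hα hg).le

lemma isProbabilityMeasure_slabPost (hg : 0 < conv γ x) (hγ0 : ∀ u, 0 ≤ γ u) :
    IsProbabilityMeasure (slabPost γ x) := by
  have hint : Integrable γ (gaussianReal x 1) := by
    rw [conv_eq_integral_gaussianReal] at hg
    exact .of_integral_ne_zero hg.ne'
  constructor
  rw [slabPost, withDensity_apply _ .univ, setLIntegral_univ,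
    ← ofReal_integral_eq_lintegral_ofReal (hint.div_const _)
      (.of_forall fun u ↦ div_nonneg (hγ0 u) hg.le), integral_div,
    ← conv_eq_integral_gaussianReal, div_self hg.ne', ENNReal.ofReal_one]

variable (hγ : Measurable γ) (hg : 0 < conv γ x)
include hγ hg

lemma coordPost_eq (hα : α ∈ Icc 0 1) :
    coordPost γ α x = ENNReal.ofReal (1 - aWt γ α x) • Measure.dirac 0
      + ENNReal.ofReal (aWt γ α x) • slabPost γ x := by
  have hslab : slabPost γ x
      = volume.withDensity fun u ↦ ENNReal.ofReal (phi (x - u) * γ u / conv γ x) := by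
    rw [slabPost, gaussianReal_of_var_ne_zero _ one_ne_zero,
      ← withDensity_mul _ (measurable_gaussianPDF _ _) (hγ.div_const _).ennreal_ofReal]
    congr! 2
    rw [Pi.mul_apply, gaussianPDF, ← phi_sub_eq_gaussianPDFReal,
      ← ENNReal.ofReal_mul (phi_pos _).le, mul_div_assoc]
  have hcont : (fun u ↦ ENNReal.ofReal (coordDen γ α x u)) =ᵐ[volume]
      ENNReal.ofReal (aWt γ α x) • fun u ↦ ENNReal.ofReal (phi (x - u) * γ u / conv γ x) := by
    filter_upwards [Measure.ae_ne volume 0] with u hu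
    rw [coordDen, if_neg hu, ENNReal.ofReal_mul (aWt_mem_Icc hα hg).1, Pi.smul_apply, smul_eq_mul]
  rw [coordPost, withDensity_add_measure, add_comm, dirac_withDensity, withDensity_congr_ae hcont,
    withDensity_smul' _ _ ENNReal.ofReal_ne_top, ← hslab]
  simp [coordDen]

lemma integrable_coordPost (hα : α ∈ Icc 0 1) {f : ℝ → ℝ} (hf : Integrable f (slabPost γ x)) :
    Integrable f (coordPost γ α x) := by
  rw [coordPost_eq hγ hg hα]
  exact ((integrable_dirac enorm_lt_top).smul_measure ENNReal.ofReal_ne_top).add_measure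
    (hf.smul_measure ENNReal.ofReal_ne_top)

lemma integral_coordPost (hα : α ∈ Icc 0 1) {f : ℝ → ℝ} (hf : Integrable f (slabPost γ x)) :
    ∫ u, f u ∂coordPost γ α x = (1 - aWt γ α x) * f 0 + aWt γ α x * ∫ u, f u ∂slabPost γ x := by
  have ha := aWt_mem_Icc hα hg
  rw [coordPost_eq hγ hg hα,
    integral_add_measure ((integrable_dirac enorm_lt_top).smul_measure ENNReal.ofReal_ne_top)
      (hf.smul_measure ENNReal.ofReal_ne_top), integral_smul_measure, integral_smul_measure,
    integral_dirac, ENNReal.toReal_ofReal (sub_nonneg.2 ha.2), ENNReal.toReal_ofReal ha.1,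
    smul_eq_mul, smul_eq_mul]

variable (hγ0 : ∀ u, 0 ≤ γ u)
include hγ0

lemma isProbabilityMeasure_coordPost (hα : α ∈ Icc 0 1) :
    IsProbabilityMeasure (coordPost γ α x) := by
  have := isProbabilityMeasure_slabPost hg hγ0
  have ha := aWt_mem_Icc hα hg
  constructor
  rw [coordPost_eq hγ hg hα]
  simp [← ENNReal.ofReal_add (sub_nonneg.2 ha.2) ha.1]

lemma integrable_slabPost_iff {f : ℝ → ℝ} :
    Integrable f (slabPost γ x) ↔ Integrable (fun u ↦ γ u / conv γ x * f u) (gaussianReal x 1) := by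
  rw [slabPost, integrable_withDensity_iff_integrable_smul' (hγ.div_const _).ennreal_ofReal
    (.of_forall fun _ ↦ ENNReal.ofReal_lt_top)]
  simp only [ENNReal.toReal_ofReal (div_nonneg (hγ0 _) hg.le), smul_eq_mul]

lemma integral_slabPost (f : ℝ → ℝ) :
    ∫ u, f u ∂slabPost γ x = (∫ u, γ u * f u ∂gaussianReal x 1) / conv γ x := by
  rw [slabPost, integral_withDensity_eq_integral_toReal_smul (hγ.div_const _).ennreal_ofReal
    (.of_forall fun _ ↦ ENNReal.ofReal_lt_top), ← integral_div]
  simp only [ENNReal.toReal_ofReal (div_nonneg (hγ0 _) hg.le), smul_eq_mul, div_mul_eq_mul_div]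

end Coordinate

namespace HasCauchyTails

variable {γ : ℝ → ℝ} {K : ℝ} (h : HasCauchyTails γ K)
include h

lemma nonneg (u : ℝ) : 0 ≤ γ u := (h.pos u).le

lemma isProbabilityMeasure_slabPost (x : ℝ) : IsProbabilityMeasure (slabPost γ x) :=
  _root_.isProbabilityMeasure_slabPost (h.conv_pos x) h.nonneg

lemma integrable_sq_slabPost (x μ : ℝ) : Integrable (fun u ↦ (u - μ) ^ 2) (slabPost γ x) := by
  rw [integrable_slabPost_iff h.measurable (h.conv_pos x) h.nonneg]
  refine ((memLp_id_gaussianReal 2).sub (memLp_const μ)).integrable_sq.bdd_mul (c := K / conv γ x)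
    (h.measurable.div_const _).aestronglyMeasurable (.of_forall fun u ↦ ?_)
  rw [norm_of_nonneg (div_nonneg (h.nonneg u) (h.conv_pos x).le)]
  exact div_le_div_of_nonneg_right (h.le_const u) (h.conv_pos x).le

-- The Cauchy tails give `γ u ≤ 2 K (1 + (u - x)²) / (2 + x²)`, of the order of `conv γ x` near `x`.
lemma integral_sub_sq_slabPost_le (x : ℝ) : ∫ u, (u - x) ^ 2 ∂slabPost γ x ≤ 8 * K ^ 2 := by
  have hK := h.const_pos
  have hpt (u : ℝ) :
      γ u * (u - x) ^ 2 ≤ 2 * K / (2 + x ^ 2) * ((u - x) ^ 2 + (u - x) ^ 4) := by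
    have hx : 0 < 2 + x ^ 2 := by positivity
    have htails : K / (1 + u ^ 2) ≤ 2 * K / (2 + x ^ 2) * (1 + (u - x) ^ 2) := by
      rw [div_mul_eq_mul_div, div_le_div_iff₀ (by positivity) hx, mul_right_comm, mul_assoc 2,
        mul_left_comm, mul_assoc K]
      gcongr
      nlinarith [sq_nonneg (2 * u - x), mul_nonneg (sq_nonneg u) (sq_nonneg (u - x))]
    calc γ u * (u - x) ^ 2 ≤ 2 * K / (2 + x ^ 2) * (1 + (u - x) ^ 2) * (u - x) ^ 2 := by
          gcongr
          exact (h.upper u).trans htails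
      _ = 2 * K / (2 + x ^ 2) * ((u - x) ^ 2 + (u - x) ^ 4) := by ring
  have hmom : ∫ u, ((u - x) ^ 2 + (u - x) ^ 4) ∂gaussianReal x 1 = 4 := by
    rw [integral_add (integrable_sub_pow_gaussianReal x 2) (integrable_sub_pow_gaussianReal x 4),
      integral_sub_sq_gaussianReal, integral_sub_pow_four_gaussianReal]
    norm_num
  rw [integral_slabPost h.measurable (h.conv_pos x) h.nonneg, div_le_iff₀ (h.conv_pos x)]
  calc ∫ u, γ u * (u - x) ^ 2 ∂gaussianReal x 1
      ≤ ∫ u, 2 * K / (2 + x ^ 2) * ((u - x) ^ 2 + (u - x) ^ 4) ∂gaussianReal x 1 :=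
        integral_mono_of_nonneg (.of_forall fun u ↦ mul_nonneg (h.nonneg u) (sq_nonneg _))
          (((integrable_sub_pow_gaussianReal x 2).add
            (integrable_sub_pow_gaussianReal x 4)).const_mul _) (.of_forall hpt)
    _ = 8 * K ^ 2 * (K * (2 + x ^ 2))⁻¹ := by
        rw [integral_const_mul, hmom]
        field_simp
        norm_num
    _ ≤ 8 * K ^ 2 * conv γ x := by
        gcongr
        exact h.inv_le_conv x

lemma integral_sq_slabPost_le (x μ : ℝ) :
    ∫ u, (u - μ) ^ 2 ∂slabPost γ x ≤ 16 * K ^ 2 + 2 * (x - μ) ^ 2 := by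
  have := h.isProbabilityMeasure_slabPost x
  have hx : Integrable (fun u ↦ 2 * (u - x) ^ 2) (slabPost γ x) :=
    (h.integrable_sq_slabPost x x).const_mul 2
  have hc : Integrable (fun _ ↦ 2 * (x - μ) ^ 2) (slabPost γ x) := integrable_const _
  calc ∫ u, (u - μ) ^ 2 ∂slabPost γ x
      ≤ ∫ u, (2 * (u - x) ^ 2 + 2 * (x - μ) ^ 2) ∂slabPost γ x := by
        refine integral_mono (h.integrable_sq_slabPost x μ) (hx.add hc) fun u ↦ ?_
        dsimp only
        linarith [sq_nonneg (u - x - (x - μ))]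
    _ = 2 * (∫ u, (u - x) ^ 2 ∂slabPost γ x) + 2 * (x - μ) ^ 2 := by
        rw [integral_add hx hc, integral_const_mul, integral_const, probReal_univ, one_smul]
    _ ≤ 16 * K ^ 2 + 2 * (x - μ) ^ 2 := by linarith [h.integral_sub_sq_slabPost_le x]

end HasCauchyTails

/-! ### Posterior losses -/

/-- Posterior expected squared loss of one coordinate at the true mean `μ`. -/
def coordLoss (γ : ℝ → ℝ) (α x μ : ℝ) : ℝ := ∫ u, (u - μ) ^ 2 ∂coordPost γ α x

/-- Bound on the posterior loss at `μ = 0` that holds for every prior weight. -/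
def slabLossBound (K x : ℝ) : ℝ := 16 * K ^ 2 + 2 * x ^ 2

/-- Bound on the posterior loss at `μ = 0` for prior weights at most `β`. -/
def nullLossBound (K β x : ℝ) : ℝ := min (2 * K * β / phi x) (slabLossBound K x)

lemma integral_pi_sum {ι : Type*} [Fintype ι] {Ω : ι → Type*} [∀ i, MeasurableSpace (Ω i)]
    {μ : ∀ i, Measure (Ω i)} [∀ i, IsProbabilityMeasure (μ i)] {f : ∀ i, Ω i → ℝ} (s : Finset ι)
    (hf : ∀ i ∈ s, Integrable (f i) (μ i)) :
    ∫ ω, ∑ i ∈ s, f i (ω i) ∂Measure.pi μ = ∑ i ∈ s, ∫ x, f i x ∂μ i := by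
  rw [integral_finsetSum s fun i hi ↦ integrable_comp_eval (hf i hi)]
  exact Finset.sum_congr rfl fun i hi ↦ integral_comp_eval (hf i hi).aestronglyMeasurable

lemma slabLossBound_nonneg (K x : ℝ) : 0 ≤ slabLossBound K x := by
  unfold slabLossBound
  positivity

lemma nullLossBound_nonneg {K β : ℝ} (hK : 0 ≤ K) (hβ : 0 ≤ β) (x : ℝ) :
    0 ≤ nullLossBound K β x :=
  le_min (div_nonneg (by positivity) (phi_pos x).le) (slabLossBound_nonneg K x)

lemma integrable_slabLossBound (K x : ℝ) (v : ℝ≥0) :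
    Integrable (slabLossBound K) (gaussianReal x v) :=
  (integrable_const _).add ((memLp_id_gaussianReal 2).integrable_sq.const_mul 2)

lemma integral_slabLossBound (K : ℝ) (v : ℝ≥0) :
    ∫ x, slabLossBound K x ∂gaussianReal 0 v = 16 * K ^ 2 + 2 * v := by
  have hsq : Integrable (fun x : ℝ ↦ 2 * x ^ 2) (gaussianReal 0 v) :=
    (memLp_id_gaussianReal 2).integrable_sq.const_mul 2
  simp only [slabLossBound]
  rw [integral_add (integrable_const _) hsq, integral_const_mul 2, integral_sq_gaussianReal]
  simp

lemma measurable_nullLossBound (K β : ℝ) : Measurable (nullLossBound K β) :=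
  (measurable_const.div continuous_phi.measurable).min (by unfold slabLossBound; fun_prop)

lemma integrable_nullLossBound {K β : ℝ} (hK : 0 ≤ K) (hβ : 0 ≤ β) (x : ℝ) :
    Integrable (nullLossBound K β) (gaussianReal x 1) :=
  (integrable_slabLossBound K x 1).mono' (measurable_nullLossBound K β).aestronglyMeasurable
    (.of_forall fun y ↦ by
      rw [norm_of_nonneg (nullLossBound_nonneg hK hβ y)]
      exact min_le_right _ _)

lemma integral_mul_exp_neg_sq_div_four (f : ℝ → ℝ) :
    ∫ x, f x * exp (-x ^ 2 / 4) = √(4 * π) * ∫ x, f x ∂gaussianReal 0 2 := by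
  rw [integral_gaussianReal_eq_integral_smul two_ne_zero, ← integral_const_mul]
  refine integral_congr_ae (.of_forall fun x ↦ ?_)
  have hs : √(4 * π) ≠ 0 := by positivity
  simp only [gaussianPDFReal, NNReal.coe_ofNat, sub_zero, smul_eq_mul]
  rw [show 2 * π * 2 = 4 * π by ring, show (2 : ℝ) * 2 = 4 by norm_num]
  field_simp

-- Below `2 λ` the first term of the minimum contributes at most `2 K β` per unit length;
-- beyond it the Gaussian weight has already fallen below `β exp (-x² / 4)`.
lemma phi_mul_nullLossBound_le {K β lam : ℝ} (hK : 0 ≤ K) (hβ : 0 < β) (hlam0 : 0 ≤ lam)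
    (hlam : 1 ≤ β * exp (lam ^ 2)) (x : ℝ) :
    phi x * nullLossBound K β x ≤
      (Icc (-(2 * lam)) (2 * lam)).indicator (fun _ ↦ 2 * K * β) x
        + β * (slabLossBound K x * exp (-x ^ 2 / 4)) := by
  have hφ := phi_pos x
  have hslab := slabLossBound_nonneg K x
  by_cases hx : x ∈ Icc (-(2 * lam)) (2 * lam)
  · rw [indicator_of_mem hx]
    calc phi x * nullLossBound K β x ≤ phi x * (2 * K * β / phi x) := by
          gcongr
          exact min_le_left _ _
      _ = 2 * K * β := mul_div_cancel₀ _ hφ.ne'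
      _ ≤ _ := le_add_of_nonneg_right (by positivity)
  · have hlarge : (2 * lam) ^ 2 ≤ x ^ 2 := by
      rw [mem_Icc, ← abs_le, not_le] at hx
      rw [← sq_abs x]
      gcongr
    have hφ_le : phi x ≤ β * exp (-x ^ 2 / 4) :=
      calc phi x ≤ exp (-x ^ 2 / 2) := phi_le_exp x
        _ ≤ exp (-lam ^ 2) * exp (-x ^ 2 / 4) := by
          rw [← exp_add, exp_le_exp]
          linarith
        _ ≤ β * exp (-x ^ 2 / 4) := by
          gcongr
          rwa [exp_neg, inv_le_iff_one_le_mul₀ (exp_pos _)]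
    calc phi x * nullLossBound K β x ≤ β * exp (-x ^ 2 / 4) * slabLossBound K x :=
          mul_le_mul hφ_le (min_le_right _ _) (nullLossBound_nonneg hK hβ.le x) (by positivity)
      _ = β * (slabLossBound K x * exp (-x ^ 2 / 4)) := by ring
      _ ≤ _ := le_add_of_nonneg_left (indicator_nonneg (fun _ _ ↦ by positivity) x)

lemma integral_nullLossBound_le {K β lam : ℝ} (hK : 1 ≤ K) (hβ : 0 < β) (hlam1 : 1 ≤ lam)
    (hlam : 1 ≤ β * exp (lam ^ 2)) :
    ∫ x, nullLossBound K β x ∂gaussianReal 0 1 ≤ 88 * K ^ 2 * β * lam := by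
  have hsqrt : √(4 * π) ≤ 18 / 5 := sqrt_le_iff.2 ⟨by norm_num, by linarith [pi_lt_d2]⟩
  have hind : Integrable ((Icc (-(2 * lam)) (2 * lam)).indicator fun _ ↦ 2 * K * β) :=
    (integrable_indicator_iff measurableSet_Icc).2 (integrableOn_const (by simp))
  have htail : Integrable fun x ↦ β * (slabLossBound K x * exp (-x ^ 2 / 4)) := by
    refine Integrable.const_mul (.of_integral_ne_zero ?_) β
    rw [integral_mul_exp_neg_sq_div_four, integral_slabLossBound]
    positivity
  calc ∫ x, nullLossBound K β x ∂gaussianReal 0 1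
      = ∫ x, phi x * nullLossBound K β x := integral_gaussianReal_zero_eq_integral_phi _
    _ ≤ ∫ x, ((Icc (-(2 * lam)) (2 * lam)).indicator (fun _ ↦ 2 * K * β) x
          + β * (slabLossBound K x * exp (-x ^ 2 / 4))) :=
        integral_mono_of_nonneg
          (.of_forall fun x ↦ mul_nonneg (phi_pos x).le
            (nullLossBound_nonneg (by positivity) hβ.le x))
          (hind.add htail)
          (.of_forall (phi_mul_nullLossBound_le (by positivity) hβ (by positivity) hlam))
    _ = 8 * K * β * lam + β * (√(4 * π) * (16 * K ^ 2 + 4)) := by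
        rw [integral_add hind htail, integral_indicator_const _ measurableSet_Icc,
          integral_const_mul, integral_mul_exp_neg_sq_div_four, integral_slabLossBound,
          volume_real_Icc_of_le (by linarith), smul_eq_mul, NNReal.coe_ofNat]
        ring
    _ ≤ 8 * K ^ 2 * β * lam + β * (18 / 5 * (16 * K ^ 2 + 4 * K ^ 2)) * lam := by
        refine add_le_add ?_ ((?_ : _ ≤ _).trans (le_mul_of_one_le_right (by positivity) hlam1))
        · gcongr
          exact le_self_pow₀ hK two_ne_zero
        · gcongr
          linarith [one_le_pow₀ hK (n := 2)]
    _ ≤ 88 * K ^ 2 * β * lam := by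
        have : 0 ≤ K ^ 2 * β * lam := by positivity
        linarith

namespace HasCauchyTails

variable {γ : ℝ → ℝ} {K : ℝ} (h : HasCauchyTails γ K)
include h

lemma integral_post_eq_sum {n : ℕ} {α : ℝ} (hα : α ∈ Icc 0 1) (X θ0 : Fin n → ℝ) :
    ∫ θ, ∑ i, (θ i - θ0 i) ^ 2 ∂post γ n α X = ∑ i, coordLoss γ α (X i) (θ0 i) := by
  have (i : Fin n) : IsProbabilityMeasure (coordPost γ α (X i)) :=
    isProbabilityMeasure_coordPost h.measurable (h.conv_pos _) h.nonneg hα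
  have hint (i : Fin n) : Integrable (fun u ↦ (u - θ0 i) ^ 2) (coordPost γ α (X i)) :=
    integrable_coordPost h.measurable (h.conv_pos _) hα (h.integrable_sq_slabPost _ _)
  exact integral_pi_sum Finset.univ fun i _ ↦ hint i

lemma coordLoss_eq {α : ℝ} (hα : α ∈ Icc 0 1) (x μ : ℝ) :
    coordLoss γ α x μ =
      (1 - aWt γ α x) * μ ^ 2 + aWt γ α x * ∫ u, (u - μ) ^ 2 ∂slabPost γ x := by
  rw [coordLoss, integral_coordPost h.measurable (h.conv_pos x) hα (h.integrable_sq_slabPost x μ),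
    zero_sub, neg_sq]

lemma coordLoss_le {α : ℝ} (hα : α ∈ Icc 0 1) (x μ : ℝ) :
    coordLoss γ α x μ ≤ (1 - aWt γ α x) * μ ^ 2 + (16 * K ^ 2 + 2 * (x - μ) ^ 2) := by
  rw [h.coordLoss_eq hα]
  have ha := aWt_mem_Icc hα (h.conv_pos x)
  gcongr
  exact (mul_le_of_le_one_left (integral_nonneg fun _ ↦ sq_nonneg _) ha.2).trans
    (h.integral_sq_slabPost_le x μ)

lemma coordLoss_zero_le_slabLossBound {α : ℝ} (hα : α ∈ Icc 0 1) (x : ℝ) :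
    coordLoss γ α x 0 ≤ slabLossBound K x := by
  simpa [slabLossBound] using h.coordLoss_le hα x 0

lemma coordLoss_zero_le_nullLossBound {α β : ℝ} (hα : α ∈ Icc 0 β) (hβ : β ≤ 1 / 2) (x : ℝ) :
    coordLoss γ α x 0 ≤ nullLossBound K β x := by
  have hα1 : α ∈ Icc 0 1 := ⟨hα.1, by linarith [hα.2]⟩
  have hg := h.conv_pos x
  have hφ := phi_pos x
  have hK := h.const_pos
  refine le_min ?_ (h.coordLoss_zero_le_slabLossBound hα1 x)
  have hslab : ∫ u, γ u * (u - 0) ^ 2 ∂gaussianReal x 1 ≤ K := by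
    have hpt (u : ℝ) : γ u * (u - 0) ^ 2 ≤ K := by
      calc γ u * (u - 0) ^ 2 ≤ K / (1 + u ^ 2) * (1 + u ^ 2) := by
            have := h.upper u
            gcongr
            nlinarith
        _ = K := div_mul_cancel₀ _ (by positivity)
    simpa using integral_mono_of_nonneg (μ := gaussianReal x 1)
      (.of_forall fun u ↦ mul_nonneg (h.nonneg u) (sq_nonneg _)) (integrable_const K)
      (.of_forall hpt)
  have hden : phi x / 2 ≤ margDen γ α x := by
    rw [margDen]
    nlinarith [hα.2, mul_nonneg hα.1 hg.le]
  calc coordLoss γ α x 0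
      = aWt γ α x * ((∫ u, γ u * (u - 0) ^ 2 ∂gaussianReal x 1) / conv γ x) := by
        rw [h.coordLoss_eq hα1, integral_slabPost h.measurable hg h.nonneg]
        ring
    _ ≤ aWt γ α x * (K / conv γ x) := by
        have := (aWt_mem_Icc hα1 hg).1
        gcongr
    _ = K * α / margDen γ α x := by
        rw [aWt, ← margDen]
        field_simp
    _ ≤ K * β / (phi x / 2) := by
        gcongr
        · exact mul_nonneg hK.le (hα.1.trans hα.2)
        · exact hα.2
    _ = 2 * K * β / phi x := by
        field_simp

end HasCauchyTails

/-! ### Likelihood ratios -/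

/-- Likelihood ratio of one observation between the prior weights `2 α` and `α`. -/
def likRatio (γ : ℝ → ℝ) (α x : ℝ) : ℝ := margDen γ (2 * α) x / margDen γ α x

section Likelihood

variable {γ : ℝ → ℝ} {α x : ℝ}

lemma logMarg_eq_sum_log_margDen {n : ℕ} (X : Fin n → ℝ) :
    logMarg γ α X = ∑ i, log (margDen γ α (X i)) := rfl

lemma measurable_margDen (hγ : Measurable γ) : Measurable (margDen γ α) :=
  (continuous_phi.measurable.const_mul _).add ((measurable_conv hγ).const_mul _)

lemma measurable_likRatio (hγ : Measurable γ) : Measurable (likRatio γ α) :=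
  (measurable_margDen hγ).div (measurable_margDen hγ)

lemma likRatio_pos (hα : α ∈ Icc 0 (1 / 2)) (hg : 0 < conv γ x) : 0 < likRatio γ α x :=
  div_pos (margDen_pos ⟨by linarith [hα.1], by linarith [hα.2]⟩ hg)
    (margDen_pos ⟨hα.1, by linarith [hα.2]⟩ hg)

lemma likRatio_le_two (hα : α ∈ Icc 0 1) (hg : 0 < conv γ x) : likRatio γ α x ≤ 2 := by
  rw [likRatio, div_le_iff₀ (margDen_pos hα hg), margDen, margDen]
  linarith [phi_pos x]

-- With `w = α (conv γ x - phi x)` the left side is `margDen γ α x - w² / margDen γ α x`.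
lemma phi_mul_likRatio_le (hα : α ∈ Icc 0 (1 / 2)) (hg : 0 < conv γ x)
    (hlarge : 2 * phi x ≤ α * conv γ x) :
    phi x * likRatio γ α x ≤ margDen γ α x - α * conv γ x / 4 := by
  have hD := margDen_pos ⟨hα.1, by linarith [hα.2]⟩ hg
  have hφ := phi_pos x
  set y := α * conv γ x with hy
  set w := y - α * phi x with hw
  have hDw : margDen γ α x = phi x + w := by
    rw [margDen, hw, hy]
    ring
  have hD2w : margDen γ (2 * α) x = margDen γ α x + w := by
    rw [margDen, margDen, hw, hy]
    ring
  have hαφ : 0 ≤ α * phi x ∧ α * phi x ≤ phi x / 2 :=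
    ⟨mul_nonneg hα.1 hφ.le, by nlinarith [hα.2]⟩
  have hD_le : margDen γ α x ≤ 3 / 2 * y := by linarith
  have hsq : margDen γ α x * (y / 4) ≤ w ^ 2 := by
    nlinarith [mul_le_mul_of_nonneg_right hD_le (by linarith : 0 ≤ y)]
  rw [likRatio, mul_div_assoc', div_le_iff₀ hD, hD2w]
  rw [hDw] at hsq ⊢
  linear_combination hsq

lemma concaveOn_logMarg {n : ℕ} {X : Fin n → ℝ} (hg : ∀ i, 0 < conv γ (X i)) :
    ConcaveOn ℝ (Icc 0 1) fun α ↦ logMarg γ α X := by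
  refine ⟨convex_Icc 0 1, fun a ha b hb s t hs ht hst ↦ ?_⟩
  simp only [logMarg_eq_sum_log_margDen, smul_eq_mul, Finset.mul_sum, ← Finset.sum_add_distrib]
  refine Finset.sum_le_sum fun i _ ↦ ?_
  have haffine :
      margDen γ (s * a + t * b) (X i) = s * margDen γ a (X i) + t * margDen γ b (X i) := by
    simp only [margDen]
    linear_combination (-phi (X i)) * hst
  rw [haffine]
  exact strictConcaveOn_log_Ioi.concaveOn.2 (margDen_pos ha (hg i)) (margDen_pos hb (hg i))
    hs ht hst

lemma one_le_prod_likRatio {n : ℕ} {X : Fin n → ℝ} (hg : ∀ i, 0 < conv γ (X i)) {a : ℝ}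
    (hα : 0 ≤ α) (ha : a ∈ Icc (2 * α) 1) (hmarg : logMarg γ α X ≤ logMarg γ a X) :
    1 ≤ ∏ i, likRatio γ α (X i) := by
  have hαI : α ∈ Icc (0 : ℝ) 1 := ⟨hα, by linarith [ha.1, ha.2]⟩
  have h2α : 2 * α ∈ Icc (0 : ℝ) 1 := ⟨by linarith, ha.1.trans ha.2⟩
  have hconcave : logMarg γ α X ≤ logMarg γ (2 * α) X := by
    simpa only [min_eq_left hmarg] using (concaveOn_logMarg hg).min_le_of_mem_Icc hαI
      ⟨h2α.1.trans ha.1, ha.2⟩ ⟨by linarith, ha.1⟩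
  have hpos (i : Fin n) : 0 < likRatio γ α (X i) :=
    likRatio_pos ⟨hα, by linarith [h2α.2]⟩ (hg i)
  rw [← log_nonneg_iff (Finset.prod_pos fun i _ ↦ hpos i), log_prod fun i _ ↦ (hpos i).ne']
  simp only [likRatio, log_div (margDen_pos h2α (hg _)).ne' (margDen_pos hαI (hg _)).ne',
    Finset.sum_sub_distrib]
  exact sub_nonneg.2 hconcave

end Likelihood

namespace HasCauchyTails

variable {γ : ℝ → ℝ} {K : ℝ} (h : HasCauchyTails γ K) {α lam : ℝ}
include h

lemma integrable_margDen : Integrable (margDen γ α) :=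
  (integrable_phi.const_mul _).add (h.integrable_conv.const_mul _)

lemma integral_margDen : ∫ x, margDen γ α x = 1 := by
  simp only [margDen]
  rw [integral_add (integrable_phi.const_mul _) (h.integrable_conv.const_mul _),
    integral_const_mul, integral_const_mul, integral_phi, h.integral_conv]
  ring

lemma integrable_likRatio (hα : α ∈ Icc 0 (1 / 2)) (x : ℝ) :
    Integrable (likRatio γ α) (gaussianReal x 1) :=
  .of_bound (measurable_likRatio h.measurable).aestronglyMeasurable 2 <| .of_forall fun y ↦ by
    rw [norm_of_nonneg (likRatio_pos hα (h.conv_pos y)).le]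
    exact likRatio_le_two ⟨hα.1, by linarith [hα.2]⟩ (h.conv_pos y)

lemma phi_mul_likRatio_le_sub_indicator (hα : α ∈ Icc 0 (1 / 2)) (hlam1 : 1 ≤ lam)
    (hlam : 8 * K ≤ α * exp (lam ^ 2)) (x : ℝ) :
    phi x * likRatio γ α x ≤ margDen γ α x -
      (Icc (2 * lam) (4 * lam)).indicator (fun _ ↦ α / (72 * K * lam ^ 2)) x := by
  have hK := h.const_pos
  have hα1 : α ∈ Icc 0 1 := ⟨hα.1, by linarith [hα.2]⟩
  have hα0 := hα.1
  have hg := h.conv_pos x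
  by_cases hx : x ∈ Icc (2 * lam) (4 * lam)
  · have hx_lower : lam ^ 2 ≤ x ^ 2 / 4 := by nlinarith [hx.1]
    have hx_upper : x ^ 2 ≤ 16 * lam ^ 2 := by nlinarith [hx.1, hx.2]
    have hlarge : 2 * phi x ≤ α * conv γ x :=
      calc 2 * phi x = 8 * K * (phi x / (4 * K)) := by
            field_simp
            ring
        _ ≤ α * exp (x ^ 2 / 4) * (phi x / (4 * K)) := by
            refine mul_le_mul_of_nonneg_right (hlam.trans ?_)
              (div_nonneg (phi_pos x).le (by positivity))
            gcongr
        _ = α * (exp (x ^ 2 / 4) / (4 * K) * phi x) := by ring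
        _ ≤ α * conv γ x := by
            gcongr
            exact h.exp_mul_phi_le_conv x
    have hgain : α / (72 * K * lam ^ 2) ≤ α * conv γ x / 4 :=
      calc α / (72 * K * lam ^ 2) = α * (K * (18 * lam ^ 2))⁻¹ / 4 := by
            field_simp
            ring
        _ ≤ α * (K * (2 + x ^ 2))⁻¹ / 4 := by
            gcongr
            nlinarith
        _ ≤ α * conv γ x / 4 := by
            gcongr
            exact h.inv_le_conv x
    rw [indicator_of_mem hx]
    exact (phi_mul_likRatio_le hα hg hlarge).trans (sub_le_sub_left hgain _)
  · rw [indicator_of_notMem hx, sub_zero, likRatio, mul_div_assoc',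
      div_le_iff₀ (margDen_pos hα1 hg), margDen, margDen]
    nlinarith [sq_nonneg (α * (conv γ x - phi x))]

lemma integral_likRatio_le (hα : α ∈ Icc 0 (1 / 2)) (hlam1 : 1 ≤ lam)
    (hlam : 8 * K ≤ α * exp (lam ^ 2)) :
    ∫ x, likRatio γ α x ∂gaussianReal 0 1 ≤ 1 - α / (36 * K * lam) := by
  have hK := h.const_pos
  have hind : Integrable ((Icc (2 * lam) (4 * lam)).indicator fun _ ↦ α / (72 * K * lam ^ 2)) :=
    (integrable_indicator_iff measurableSet_Icc).2 (integrableOn_const (by simp))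
  calc ∫ x, likRatio γ α x ∂gaussianReal 0 1
      = ∫ x, phi x * likRatio γ α x := integral_gaussianReal_zero_eq_integral_phi _
    _ ≤ ∫ x, (margDen γ α x -
          (Icc (2 * lam) (4 * lam)).indicator (fun _ ↦ α / (72 * K * lam ^ 2)) x) :=
        integral_mono ((integrable_gaussianReal_zero_iff _).1 (h.integrable_likRatio hα 0))
          (h.integrable_margDen.sub hind) (h.phi_mul_likRatio_le_sub_indicator hα hlam1 hlam)
    _ = 1 - α / (36 * K * lam) := by
        rw [integral_sub h.integrable_margDen hind, h.integral_margDen,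
          integral_indicator_const _ measurableSet_Icc, volume_real_Icc_of_le (by linarith),
          smul_eq_mul]
        field_simp
        ring

lemma integral_likRatio_le_exp (hα : α ∈ Icc 0 (1 / 2)) (hlam1 : 1 ≤ lam)
    (hlam : 8 * K ≤ α * exp (lam ^ 2)) (μ : ℝ) :
    ∫ x, likRatio γ α x ∂gaussianReal μ 1 ≤ exp (if μ = 0 then -(α / (36 * K * lam)) else 1) := by
  split_ifs with hμ
  · rw [hμ]
    exact (h.integral_likRatio_le hα hlam1 hlam).trans (one_sub_le_exp_neg _)
  · have hle := integral_mono (h.integrable_likRatio hα μ) (integrable_const 2)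
      fun x ↦ likRatio_le_two ⟨hα.1, by linarith [hα.2]⟩ (h.conv_pos x)
    rw [integral_const, probReal_univ, one_smul] at hle
    linarith [add_one_le_exp (1 : ℝ)]

lemma integral_slabLossBound_mul_likRatio_le (hα : α ∈ Icc 0 (1 / 2)) :
    ∫ x, slabLossBound K x * likRatio γ α x ∂gaussianReal 0 1 ≤ 36 * K ^ 2 := by
  have hα1 : α ∈ Icc 0 1 := ⟨hα.1, by linarith [hα.2]⟩
  calc ∫ x, slabLossBound K x * likRatio γ α x ∂gaussianReal 0 1
      ≤ ∫ x, slabLossBound K x * 2 ∂gaussianReal 0 1 :=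
        integral_mono_of_nonneg
          (.of_forall fun x ↦ mul_nonneg (slabLossBound_nonneg K x)
            (likRatio_pos hα (h.conv_pos x)).le)
          ((integrable_slabLossBound K 0 1).mul_const 2)
          (.of_forall fun x ↦ mul_le_mul_of_nonneg_left (likRatio_le_two hα1 (h.conv_pos x))
            (slabLossBound_nonneg K x))
    _ = (16 * K ^ 2 + 2) * 2 := by
        rw [integral_mul_const, integral_slabLossBound]
        simp
    _ ≤ 36 * K ^ 2 := by nlinarith [h.one_le_const]

-- Each zero coordinate other than `j` contributes a factor at most `exp (-α / (36 K λ))`.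
lemma integral_slabLossBound_mul_prod_likRatio_le (hα : α ∈ Icc 0 (1 / 2)) (hlam1 : 1 ≤ lam)
    (hlam : 8 * K ≤ α * exp (lam ^ 2)) {n : ℕ} {θ : Fin n → ℝ} {j : Fin n} (hj : θ j = 0) :
    ∫ X, slabLossBound K (X j) * ∏ i, likRatio γ α (X i) ∂Pdata n θ ≤
      36 * K ^ 2 * exp (#{i | θ i ≠ 0} - α / (36 * K * lam) * (#{i | θ i = 0} - 1)) := by
  set κ := α / (36 * K * lam)
  set f : Fin n → ℝ → ℝ :=
    Function.update (fun _ ↦ likRatio γ α) j fun x ↦ slabLossBound K x * likRatio γ α x with hf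
  have hf_ne {i : Fin n} (hi : i ∈ Finset.univ.erase j) : f i = likRatio γ α :=
    Function.update_of_ne (Finset.ne_of_mem_erase hi) _ _
  have hfactor (X : Fin n → ℝ) :
      slabLossBound K (X j) * ∏ i, likRatio γ α (X i) = ∏ i, f i (X i) := by
    rw [← Finset.mul_prod_erase _ _ (Finset.mem_univ j),
      ← Finset.mul_prod_erase _ _ (Finset.mem_univ j), ← mul_assoc, hf, Function.update_self,
      ← hf, Finset.prod_congr rfl fun i hi ↦ congrFun (hf_ne hi) (X i)]
  have hsum : ∑ i ∈ Finset.univ.erase j, (if θ i = 0 then -κ else 1) =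
      #{i | θ i ≠ 0} - κ * (#{i | θ i = 0} - 1) := by
    rw [Finset.sum_erase_eq_sub (Finset.mem_univ j), Finset.sum_ite, if_pos hj]
    simp only [Finset.sum_const, nsmul_eq_mul]
    ring
  calc ∫ X, slabLossBound K (X j) * ∏ i, likRatio γ α (X i) ∂Pdata n θ
      = (∫ x, slabLossBound K x * likRatio γ α x ∂gaussianReal 0 1) *
          ∏ i ∈ Finset.univ.erase j, ∫ x, likRatio γ α x ∂gaussianReal (θ i) 1 := by
        simp only [hfactor]
        rw [Pdata, integral_fintype_prod_eq_prod, ← Finset.mul_prod_erase _ _ (Finset.mem_univ j),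
          hj, hf, Function.update_self, Finset.prod_congr rfl fun i hi ↦ by rw [← hf, hf_ne hi]]
    _ ≤ 36 * K ^ 2 * ∏ i ∈ Finset.univ.erase j, exp (if θ i = 0 then -κ else 1) :=
        mul_le_mul (h.integral_slabLossBound_mul_likRatio_le hα)
          (Finset.prod_le_prod (fun i _ ↦ integral_nonneg fun x ↦
            (likRatio_pos hα (h.conv_pos x)).le) fun i _ ↦
              h.integral_likRatio_le_exp hα hlam1 hlam _)
          (Finset.prod_nonneg fun i _ ↦ integral_nonneg fun x ↦
            (likRatio_pos hα (h.conv_pos x)).le) (by positivity)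
    _ = 36 * K ^ 2 * exp (#{i | θ i ≠ 0} - κ * (#{i | θ i = 0} - 1)) := by
        rw [← exp_sum, hsum]

lemma integrable_slabLossBound_mul_prod_likRatio (hα : α ∈ Icc 0 (1 / 2)) {n : ℕ}
    (θ : Fin n → ℝ) (j : Fin n) :
    Integrable (fun X ↦ slabLossBound K (X j) * ∏ i, likRatio γ α (X i)) (Pdata n θ) := by
  have hα1 : α ∈ Icc 0 1 := ⟨hα.1, by linarith [hα.2]⟩
  have hR0 (x : ℝ) : 0 ≤ likRatio γ α x := (likRatio_pos hα (h.conv_pos x)).le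
  refine Integrable.mul_bdd (c := 2 ^ n)
    (integrable_comp_eval (integrable_slabLossBound K (θ j) 1))
    (Finset.measurable_prod _ fun i _ ↦ (measurable_likRatio h.measurable).comp
      (measurable_pi_apply i)).aestronglyMeasurable (.of_forall fun X ↦ ?_)
  rw [norm_of_nonneg (Finset.prod_nonneg fun i _ ↦ hR0 _)]
  calc ∏ i, likRatio γ α (X i) ≤ ∏ _i : Fin n, 2 :=
        Finset.prod_le_prod (fun i _ ↦ hR0 _) fun i _ ↦ likRatio_le_two hα1 (h.conv_pos _)
    _ = 2 ^ n := by simp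

end HasCauchyTails

/-! ### The risk of the plug-in posterior -/

lemma mul_sq_le_of_le_exp {q x B : ℝ} (hq0 : 0 ≤ q) (hq1 : q ≤ 1) (hB : 1 ≤ B)
    (hq : q ≤ exp (B - x ^ 2 / 4)) : q * x ^ 2 ≤ 4 * B := by
  rcases le_total (x ^ 2 / 4) B with hx | hx
  · exact (mul_le_of_le_one_left (sq_nonneg x) hq1).trans (by linarith)
  · set y := x ^ 2 / 4 - B with hy
    have hy0 : 0 ≤ y := sub_nonneg.2 hx
    have hqy : q * (1 + y) ≤ 1 :=
      calc q * (1 + y) ≤ exp (-y) * exp y := by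
            gcongr
            · simpa [hy] using hq
            · linarith [add_one_le_exp y]
        _ = 1 := by rw [← exp_add, neg_add_cancel, exp_zero]
    calc q * x ^ 2 = 4 * (q * (B + y)) := by rw [hy]; ring
      _ ≤ 4 * (q * (B * (1 + y))) := by
          gcongr
          linarith [mul_nonneg (sub_nonneg.2 hB) hy0]
      _ = 4 * B * (q * (1 + y)) := by ring
      _ ≤ 4 * B := mul_le_of_le_one_right (by linarith) hqy

namespace HasCauchyTails

variable {γ : ℝ → ℝ} {K : ℝ} (h : HasCauchyTails γ K)
include h

lemma one_sub_aWt_le_exp {a r ρ : ℝ} (ha : a ∈ Icc 0 1) (hr : 0 < r) (hρ : ρ ∈ Icc r 1) (x : ℝ) :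
    1 - aWt γ a x ≤
      exp (log (margDen γ ρ x) - log (margDen γ a x) + log (4 * K / r) - x ^ 2 / 4) := by
  have hK := h.const_pos
  have hg := h.conv_pos x
  have hφ := phi_pos x
  have hDa := margDen_pos ha hg
  have hDρ := margDen_pos ⟨hr.le.trans hρ.1, hρ.2⟩ hg
  have hslab : r * (exp (x ^ 2 / 4) / (4 * K) * phi x) ≤ margDen γ ρ x :=
    calc r * (exp (x ^ 2 / 4) / (4 * K) * phi x) ≤ ρ * conv γ x :=
          mul_le_mul hρ.1 (h.exp_mul_phi_le_conv x) (by positivity) (hr.le.trans hρ.1)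
      _ ≤ margDen γ ρ x := le_add_of_nonneg_left (mul_nonneg (sub_nonneg.2 hρ.2) hφ.le)
  rw [exp_sub, exp_add, exp_sub, exp_log hDρ, exp_log hDa, exp_log (by positivity),
    one_sub_aWt ha hg]
  calc (1 - a) * phi x / margDen γ a x ≤ phi x / margDen γ a x := by
        gcongr
        exact mul_le_of_le_one_left hφ.le (by linarith [ha.1])
    _ = r * (exp (x ^ 2 / 4) / (4 * K) * phi x) / margDen γ a x * (4 * K / r) /
          exp (x ^ 2 / 4) := by
        field_simp
    _ ≤ margDen γ ρ x / margDen γ a x * (4 * K / r) / exp (x ^ 2 / 4) := by gcongr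

lemma log_margDen_sub_le {a r : ℝ} (ha : a ∈ Icc 0 1) (hr : r ∈ Icc 0 (1 / 2)) (x : ℝ) :
    log (margDen γ a x) - 2 * r ≤ log (margDen γ (max a r) x) := by
  have hg := h.conv_pos x
  have hφ := phi_pos x
  have hDa := margDen_pos ha hg
  have hlog : -(2 * r) ≤ log (1 - r) := by
    have := one_sub_inv_le_log_of_pos (by linarith [hr.2] : 0 < 1 - r)
    have : (1 - r)⁻¹ ≤ 1 + 2 * r := by
      rw [inv_le_iff_one_le_mul₀ (by linarith [hr.2])]
      nlinarith [hr.1, hr.2]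
    linarith
  rcases le_total r a with hra | hra
  · rw [max_eq_left hra]
    linarith [hr.1]
  · have hle : (1 - r) * margDen γ a x ≤ margDen γ r x := by
      have hslab : (1 - r) * a * conv γ x ≤ r * conv γ x := by
        gcongr
        nlinarith [ha.1, hr.1]
      have hnull : (1 - r) * (1 - a) * phi x ≤ (1 - r) * phi x := by
        gcongr
        nlinarith [ha.1, hr.2]
      rw [margDen, margDen]
      linarith
    calc log (margDen γ a x) - 2 * r ≤ log (1 - r) + log (margDen γ a x) := by linarith
      _ = log ((1 - r) * margDen γ a x) :=
          (log_mul (by linarith [hr.2]) hDa.ne').symm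
      _ ≤ log (margDen γ r x) := log_le_log (mul_pos (by linarith [hr.2]) hDa) hle
      _ = log (margDen γ (max a r) x) := by rw [max_eq_right hra]

-- Raising the weight to `max a r` costs each summand of the log-marginal likelihood at most
-- `2 r`, but gains the amount by which `X i ^ 2 / 4` exceeds `log (4 K / r)` wherever the
-- coordinate is still attributed to the spike; maximality bounds the total gain.
lemma sum_one_sub_aWt_mul_sq_le {n : ℕ} {X : Fin n → ℝ} {a r : ℝ} (ha : a ∈ Icc 0 1)
    (hr : r ∈ Ioc 0 (1 / 2)) (hmax : logMarg γ (max a r) X ≤ logMarg γ a X)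
    (S : Finset (Fin n)) :
    ∑ i ∈ S, (1 - aWt γ a (X i)) * X i ^ 2 ≤ 4 * (2 * n * r + #S * log (4 * K / r)) := by
  set gain : Fin n → ℝ := fun i ↦ log (margDen γ (max a r) (X i)) - log (margDen γ a (X i))
  have hgain (i : Fin n) : -(2 * r) ≤ gain i :=
    neg_le_sub_iff_le_add'.2 <| by
      linarith [h.log_margDen_sub_le ha ⟨hr.1.le, hr.2⟩ (X i)]
  have hlog : 2 ≤ log (4 * K / r) := by
    have hr0 := hr.1
    rw [le_log_iff_exp_le (div_pos (by linarith [h.const_pos]) hr0), le_div_iff₀ hr0,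
      show (2 : ℝ) = 1 + 1 by norm_num, exp_add]
    nlinarith [exp_one_lt_d9, exp_pos 1, hr.2, h.one_le_const]
  have hcoord (i : Fin n) : (1 - aWt γ a (X i)) * X i ^ 2 ≤ 4 * (gain i + log (4 * K / r)) := by
    have hweight := aWt_mem_Icc ha (h.conv_pos (X i))
    exact mul_sq_le_of_le_exp (sub_nonneg.2 hweight.2) (sub_le_self _ hweight.1)
      (by linarith [hgain i, hr.2])
      (h.one_sub_aWt_le_exp ha hr.1 ⟨le_max_right a r, max_le ha.2 (by linarith [hr.2])⟩ (X i))
  have hsum : ∑ i ∈ S, gain i ≤ 2 * n * r :=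
    calc ∑ i ∈ S, gain i ≤ ∑ i ∈ S, (gain i + 2 * r) := by
          gcongr with i
          linarith [hr.1]
      _ ≤ ∑ i, (gain i + 2 * r) :=
          Finset.sum_le_univ_sum_of_nonneg fun i ↦ by linarith [hgain i]
      _ = logMarg γ (max a r) X - logMarg γ a X + 2 * n * r := by
          rw [Finset.sum_add_distrib, Finset.sum_sub_distrib]
          simp only [logMarg_eq_sum_log_margDen, Finset.sum_const, Finset.card_univ,
            Fintype.card_fin, nsmul_eq_mul]
          ring
      _ ≤ 2 * n * r := by linarith
  calc ∑ i ∈ S, (1 - aWt γ a (X i)) * X i ^ 2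
      ≤ ∑ i ∈ S, 4 * (gain i + log (4 * K / r)) := Finset.sum_le_sum fun i _ ↦ hcoord i
    _ = 4 * (∑ i ∈ S, gain i + #S * log (4 * K / r)) := by
        rw [← Finset.mul_sum, Finset.sum_add_distrib, Finset.sum_const, nsmul_eq_mul]
    _ ≤ 4 * (2 * n * r + #S * log (4 * K / r)) := by gcongr

lemma sum_coordLoss_le {n : ℕ} {X : Fin n → ℝ} {a r : ℝ} (ha : a ∈ Icc 0 1)
    (hr : r ∈ Ioc 0 (1 / 2)) (hmax : logMarg γ (max a r) X ≤ logMarg γ a X)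
    (θ : Fin n → ℝ) (S : Finset (Fin n)) :
    ∑ i ∈ S, coordLoss γ a (X i) (θ i) ≤
      8 * (2 * n * r + #S * log (4 * K / r)) + ∑ i ∈ S, (16 * K ^ 2 + 4 * (X i - θ i) ^ 2) := by
  have hcoord (i : Fin n) : coordLoss γ a (X i) (θ i) ≤
      2 * ((1 - aWt γ a (X i)) * X i ^ 2) + (16 * K ^ 2 + 4 * (X i - θ i) ^ 2) := by
    have hweight := aWt_mem_Icc ha (h.conv_pos (X i))
    have hθ : θ i ^ 2 ≤ 2 * X i ^ 2 + 2 * (X i - θ i) ^ 2 := by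
      linarith [sq_nonneg (2 * X i - θ i)]
    have hspike : (1 - aWt γ a (X i)) * θ i ^ 2 ≤
        2 * ((1 - aWt γ a (X i)) * X i ^ 2) + 2 * (X i - θ i) ^ 2 := by
      linarith [mul_le_mul_of_nonneg_left hθ (sub_nonneg.2 hweight.2),
        mul_nonneg hweight.1 (sq_nonneg (X i - θ i))]
    linarith [h.coordLoss_le ha (X i) (θ i)]
  refine (Finset.sum_le_sum fun i _ ↦ hcoord i).trans ?_
  rw [Finset.sum_add_distrib, ← Finset.mul_sum]
  linarith [h.sum_one_sub_aWt_mul_sq_le ha hr hmax S]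

-- The product of likelihood ratios is at least `1` whenever the estimated weight exceeds `2 α`.
lemma coordLoss_zero_le_add {n : ℕ} {X : Fin n → ℝ} {a α : ℝ} (ha : a ∈ Icc 0 1)
    (hα : α ∈ Icc 0 (1 / 4)) (hmax : logMarg γ α X ≤ logMarg γ a X) (j : Fin n) :
    coordLoss γ a (X j) 0 ≤
      nullLossBound K (2 * α) (X j) + slabLossBound K (X j) * ∏ i, likRatio γ α (X i) := by
  have hprod : 0 ≤ ∏ i, likRatio γ α (X i) := Finset.prod_nonneg fun i _ ↦
    (likRatio_pos ⟨hα.1, by linarith [hα.2]⟩ (h.conv_pos _)).le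
  have hslab := slabLossBound_nonneg K (X j)
  rcases le_total a (2 * α) with haα | haα
  · exact (h.coordLoss_zero_le_nullLossBound ⟨ha.1, haα⟩ (by linarith [hα.2]) (X j)).trans
      (le_add_of_nonneg_right (mul_nonneg hslab hprod))
  · have hone := one_le_prod_likRatio (fun i ↦ h.conv_pos (X i)) hα.1 ⟨haα, ha.2⟩ hmax
    exact (h.coordLoss_zero_le_slabLossBound ha (X j)).trans
      ((le_mul_of_one_le_right hslab hone).trans (le_add_of_nonneg_left
        (nullLossBound_nonneg h.const_pos.le (by linarith [hα.1]) _)))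

end HasCauchyTails

lemma card_ne_zero_le_of_mem_ell0 {n s : ℕ} {θ : Fin n → ℝ} (hθ : θ ∈ ell0 n s) :
    #{i | θ i ≠ 0} ≤ s := by
  rwa [ell0, mem_ofPred_eq, Nat.card_eq_fintype_card, Fintype.card_subtype] at hθ

instance isProbabilityMeasure_Pdata (n : ℕ) (θ : Fin n → ℝ) :
    IsProbabilityMeasure (Pdata n θ) := by
  unfold Pdata
  infer_instance

lemma integrable_Pdata_eval {n : ℕ} {θ : Fin n → ℝ} {i : Fin n} {f : ℝ → ℝ}
    (hf : Integrable f (gaussianReal (θ i) 1)) : Integrable (fun X ↦ f (X i)) (Pdata n θ) :=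
  integrable_comp_eval hf

lemma integrable_add_sub_sq_gaussianReal (c x : ℝ) :
    Integrable (fun y ↦ c + 4 * (y - x) ^ 2) (gaussianReal x 1) :=
  (integrable_const _).add ((integrable_sub_pow_gaussianReal x 2).const_mul 4)

lemma integral_sum_add_sub_sq_Pdata {n : ℕ} (θ : Fin n → ℝ) (c : ℝ) (S : Finset (Fin n)) :
    ∫ X, ∑ i ∈ S, (c + 4 * (X i - θ i) ^ 2) ∂Pdata n θ = #S * (c + 4) := by
  have hmean (x : ℝ) : ∫ y, (c + 4 * (y - x) ^ 2) ∂gaussianReal x 1 = c + 4 := by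
    rw [integral_add (integrable_const _) ((integrable_sub_pow_gaussianReal x 2).const_mul 4),
      integral_const_mul, integral_sub_sq_gaussianReal, integral_const, probReal_univ, one_smul,
      mul_one]
  rw [Pdata, integral_pi_sum S fun i _ ↦ integrable_add_sub_sq_gaussianReal c (θ i)]
  simp only [hmean, Finset.sum_const, nsmul_eq_mul]

lemma integral_sum_nullLossBound_Pdata_le {n : ℕ} (θ : Fin n → ℝ) {K β lam : ℝ} (hK : 1 ≤ K)
    (hβ : 0 < β) (hlam1 : 1 ≤ lam) (hlam : 1 ≤ β * exp (lam ^ 2)) :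
    ∫ X, ∑ i with θ i = 0, nullLossBound K β (X i) ∂Pdata n θ ≤
      #{i | θ i = 0} * (88 * K ^ 2 * β * lam) := by
  rw [Pdata, integral_pi_sum _ fun i _ ↦ integrable_nullLossBound (by linarith) hβ.le (θ i),
    ← nsmul_eq_mul]
  refine Finset.sum_le_card_nsmul _ _ _ fun i hi ↦ ?_
  rw [(Finset.mem_filter.1 hi).2]
  exact integral_nullLossBound_le hK hβ hlam1 hlam

namespace HasCauchyTails

variable {γ : ℝ → ℝ} {K : ℝ} (h : HasCauchyTails γ K) {n : ℕ} {αn α r lam : ℝ}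
  {hahat : (Fin n → ℝ) → ℝ}
include h

lemma integral_post_le (hαn : 0 ≤ αn) (hMLE : IsMMLE γ αn hahat) (hα : α ∈ Icc αn (1 / 4))
    (hr : r ∈ Ioc 0 (1 / 2)) (θ X : Fin n → ℝ) :
    ∫ η, ∑ i, (η i - θ i) ^ 2 ∂post γ n (hahat X) X ≤
      8 * (2 * n * r + #{i | θ i ≠ 0} * log (4 * K / r)) +
        ∑ i with θ i ≠ 0, (16 * K ^ 2 + 4 * (X i - θ i) ^ 2) +
        (∑ i with θ i = 0, nullLossBound K (2 * α) (X i) +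
          ∑ i with θ i = 0, slabLossBound K (X i) * ∏ j, likRatio γ α (X j)) := by
  obtain ⟨hmem, hmax⟩ := hMLE.2 X
  have ha : hahat X ∈ Icc 0 1 := ⟨hαn.trans hmem.1, hmem.2⟩
  have hmaxα := hmax α ⟨hα.1, by linarith [hα.2]⟩
  have hmaxr := hmax (max (hahat X) r)
    ⟨hmem.1.trans (le_max_left _ _), max_le hmem.2 (by linarith [hr.2])⟩
  rw [h.integral_post_eq_sum ha, ← Finset.sum_filter_not_add_sum_filter _ (θ · = 0)]
  refine add_le_add (h.sum_coordLoss_le ha hr hmaxr θ _) ?_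
  rw [← Finset.sum_add_distrib]
  refine Finset.sum_le_sum fun i hi ↦ ?_
  rw [(Finset.mem_filter.1 hi).2]
  exact h.coordLoss_zero_le_add ha ⟨hαn.trans hα.1, hα.2⟩ hmaxα i

-- In order: signal coordinates, zero coordinates while the estimated weight is at most `2 α`,
-- and zero coordinates on the event that it exceeds `2 α`.
lemma postRisk_le_add (hαn : 0 ≤ αn) (hMLE : IsMMLE γ αn hahat) (hα : α ∈ Icc αn (1 / 4))
    (hr : r ∈ Ioc 0 (1 / 2)) (hlam1 : 1 ≤ lam) (hlam : 8 * K ≤ α * exp (lam ^ 2))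
    (θ : Fin n → ℝ) :
    postRisk γ hahat θ ≤
      8 * (2 * n * r + #{i | θ i ≠ 0} * log (4 * K / r)) + #{i | θ i ≠ 0} * (16 * K ^ 2 + 4) +
        (#{i | θ i = 0} * (88 * K ^ 2 * (2 * α) * lam) +
          #{i | θ i = 0} * (36 * K ^ 2 *
            exp (#{i | θ i ≠ 0} - α / (36 * K * lam) * (#{i | θ i = 0} - 1)))) := by
  have hα2 : α ∈ Icc 0 (1 / 2) := ⟨hαn.trans hα.1, by linarith [hα.2]⟩
  have hK := h.one_le_const
  have hα0 : 0 < α := pos_of_mul_pos_left (by linarith : 0 < α * exp (lam ^ 2)) (exp_pos _).le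
  have signal : Integrable (fun X ↦ 8 * (2 * n * r + #{i | θ i ≠ 0} * log (4 * K / r)) +
      ∑ i with θ i ≠ 0, (16 * K ^ 2 + 4 * (X i - θ i) ^ 2)) (Pdata n θ) :=
    (integrable_const _).add <| integrable_finsetSum _ fun i _ ↦
      integrable_Pdata_eval (integrable_add_sub_sq_gaussianReal _ (θ i))
  have null : Integrable (fun X ↦ ∑ i with θ i = 0, nullLossBound K (2 * α) (X i))
      (Pdata n θ) :=
    integrable_finsetSum _ fun i _ ↦
      integrable_Pdata_eval (integrable_nullLossBound (by linarith) (by linarith) (θ i))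
  have bad (i : Fin n) := h.integrable_slabLossBound_mul_prod_likRatio hα2 θ i
  have bads := integrable_finsetSum {i | θ i = 0} fun i _ ↦ bad i
  refine (integral_mono_of_nonneg
    (.of_forall fun X ↦ integral_nonneg fun η ↦ Finset.sum_nonneg fun i _ ↦ sq_nonneg _)
    (signal.add (null.add bads))
    (.of_forall fun X ↦ h.integral_post_le hαn hMLE hα hr θ X)).trans ?_
  rw [integral_add' signal (null.add bads), integral_add' null bads,
    integral_add (integrable_const _) (integrable_finsetSum _ fun i _ ↦
      integrable_Pdata_eval (integrable_add_sub_sq_gaussianReal _ (θ i))),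
    integral_const, probReal_univ, one_smul, integral_sum_add_sub_sq_Pdata,
    integral_finsetSum _ fun i _ ↦ bad i]
  gcongr
  · exact integral_sum_nullLossBound_Pdata_le θ hK (by linarith) hlam1 (by linarith)
  · rw [← nsmul_eq_mul]
    exact Finset.sum_le_card_nsmul _ _ _ fun i hi ↦
      h.integral_slabLossBound_mul_prod_likRatio_le hα2 hlam1 hlam (Finset.mem_filter.1 hi).2

end HasCauchyTails

lemma mul_sqrt_mul_exp_neg_le_one {c L : ℝ} (hcL : c ^ 2 ≤ exp L) :
    c * √L * exp (-L) ≤ 1 := by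
  have hsqrt : √L ≤ √(exp L) := sqrt_le_sqrt (by linarith [add_one_le_exp L])
  have hc_le : c ≤ √(exp L) := le_sqrt_of_sq_le hcL
  calc c * √L * exp (-L) ≤ √(exp L) * √(exp L) * exp (-L) := by gcongr
    _ = 1 := by rw [mul_self_sqrt (exp_pos L).le, ← exp_add, add_neg_cancel, exp_zero]

lemma card_eq_zero_add_card_ne_zero {n : ℕ} (θ : Fin n → ℝ) :
    (#{i | θ i = 0} : ℝ) + #{i | θ i ≠ 0} = n := by
  exact_mod_cast (Finset.card_filter_add_card_filter_not (s := Finset.univ) (θ · = 0)).trans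
    (Finset.card_fin n)

-- With at most `s ≤ n / 4` signals and drift `4 s / n`, the exponent of the exceptional event
-- is at most `-s`, which beats the factor `n`.
lemma card_mul_exp_le_one {n s : ℕ} (hs1 : 1 ≤ s) (hsn : 4 * (s : ℝ) ≤ n) (hlog : log n ≤ s)
    {θ : Fin n → ℝ} (hθ : θ ∈ ell0 n s) :
    #{i | θ i = 0} * exp (#{i | θ i ≠ 0} - 4 * (s / n) * (#{i | θ i = 0} - 1)) ≤ 1 := by
  have hs : (1 : ℝ) ≤ s := by exact_mod_cast hs1
  have hn : (0 : ℝ) < n := by linarith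
  have hS : (#{i | θ i ≠ 0} : ℝ) ≤ s := by exact_mod_cast card_ne_zero_le_of_mem_ell0 hθ
  have hcard := card_eq_zero_add_card_ne_zero θ
  have hnull : (n : ℝ) / 2 ≤ #{i | θ i = 0} - 1 := by linarith
  have hexp : #{i | θ i ≠ 0} - 4 * (s / n) * (#{i | θ i = 0} - 1 : ℝ) ≤ -s :=
    calc #{i | θ i ≠ 0} - 4 * (s / n) * (#{i | θ i = 0} - 1 : ℝ)
        ≤ s - 4 * (s / n) * (n / 2) := by gcongr
      _ = -s := by
          field_simp
          ring
  calc #{i | θ i = 0} * exp (#{i | θ i ≠ 0} - 4 * (s / n) * (#{i | θ i = 0} - 1))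
      ≤ n * exp (-s) := by
        gcongr
        exact card_finset_fin_le _
    _ ≤ exp s * exp (-s) := by
        gcongr
        rwa [← log_le_iff_le_exp hn]
    _ = 1 := by rw [← exp_add, add_neg_cancel, exp_zero]

/-- Cut-off for the estimated prior weight at sparsity level `exp (-L)`: it balances the loss of
the zero coordinates below the cut-off against the probability of exceeding twice its value. -/
def weightCutoff (K L : ℝ) : ℝ := 144 * K * √L * exp (-L)

lemma weightCutoff_le {K L : ℝ} (hKL : (576 * K) ^ 2 ≤ exp L) : weightCutoff K L ≤ 1 / 4 := by
  have := mul_sqrt_mul_exp_neg_le_one hKL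
  rw [weightCutoff]
  linarith

section Cutoff

variable {K L : ℝ} (hK : 1 ≤ K) (hKL : (576 * K) ^ 2 ≤ exp L)
include hK hKL

lemma one_le_of_sq_le_exp : 1 ≤ L := by
  rw [← exp_le_exp]
  nlinarith [exp_one_lt_d9]

lemma exp_neg_le_weightCutoff : exp (-L) ≤ weightCutoff K L := by
  have := one_le_sqrt.2 (one_le_of_sq_le_exp hK hKL)
  exact le_mul_of_one_le_left (exp_pos _).le (by nlinarith)

lemma eight_mul_le_weightCutoff_mul_exp : 8 * K ≤ weightCutoff K L * exp (√L ^ 2) := by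
  have hL := one_le_of_sq_le_exp hK hKL
  have := one_le_sqrt.2 hL
  rw [sq_sqrt (by linarith), weightCutoff, mul_assoc, ← exp_add, neg_add_cancel, exp_zero]
  nlinarith

lemma weightCutoff_div : weightCutoff K L / (36 * K * √L) = 4 * exp (-L) := by
  have := sqrt_pos.2 (one_pos.trans_le (one_le_of_sq_le_exp hK hKL))
  rw [weightCutoff]
  field_simp
  ring

lemma log_div_exp_neg_mem_Icc : log (4 * K / exp (-L)) ∈ Icc 0 (2 * L) := by
  rw [exp_neg, div_inv_eq_mul]
  refine ⟨log_nonneg ?_, ?_⟩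
  · nlinarith [add_one_le_exp L, one_le_of_sq_le_exp hK hKL]
  rw [log_le_iff_le_exp (by positivity), two_mul, exp_add]
  gcongr
  nlinarith

end Cutoff

namespace HasCauchyTails

variable {γ : ℝ → ℝ} {K : ℝ} (h : HasCauchyTails γ K) {n : ℕ} {αn : ℝ}
  {hahat : (Fin n → ℝ) → ℝ}
include h

-- The three groups of coordinates balance at `α ≍ (s / n) √(log (n / s))`.
lemma postRisk_le {s : ℕ} (hs1 : 1 ≤ s) (hsn : (576 * K) ^ 2 * s ≤ n) (hlog : log n ≤ s)
    (hαn : αn ∈ Icc 0 ((s : ℝ) / n)) (hMLE : IsMMLE γ αn hahat) {θ : Fin n → ℝ}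
    (hθ : θ ∈ ell0 n s) :
    postRisk γ hahat θ ≤ 30000 * K ^ 3 * (s * log (n / s)) := by
  have hK := h.one_le_const
  have hs : (1 : ℝ) ≤ s := by exact_mod_cast hs1
  have hK1 : 1 ≤ K ^ 2 := one_le_pow₀ hK
  have hsn4 : 4 * (s : ℝ) ≤ n := by nlinarith
  have hn : (0 : ℝ) < n := by linarith
  set L := log ((n : ℝ) / s)
  have hexpL : exp L = n / s := exp_log (by positivity)
  have hr : (s : ℝ) / n = exp (-L) := by rw [exp_neg, hexpL, inv_div]
  have hnr : n * exp (-L) = s := by rw [← hr, mul_div_cancel₀ _ hn.ne']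
  have hKL : (576 * K) ^ 2 ≤ exp L := by rwa [hexpL, le_div_iff₀ (by linarith)]
  have hL1 := one_le_of_sq_le_exp hK hKL
  have hα_ge := exp_neg_le_weightCutoff hK hKL
  have hα_le := weightCutoff_le hKL
  obtain ⟨hlog0, hlogK⟩ := log_div_exp_neg_mem_Icc hK hKL
  have hS : (#{i | θ i ≠ 0} : ℝ) ≤ s := by exact_mod_cast card_ne_zero_le_of_mem_ell0 hθ
  have hS0 : (#{i | θ i = 0} : ℝ) ≤ n := by exact_mod_cast card_finset_fin_le _
  have hbad := card_mul_exp_le_one hs1 hsn4 hlog hθ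
  rw [hr] at hbad
  refine (h.postRisk_le_add hαn.1 hMLE ⟨hαn.2.trans (hr.trans_le hα_ge), hα_le⟩
    ⟨exp_pos _, hα_ge.trans (by linarith)⟩ (one_le_sqrt.2 hL1)
    (eight_mul_le_weightCutoff_mul_exp hK hKL) θ).trans ?_
  rw [weightCutoff_div hK hKL, mul_left_comm _ (36 * K ^ 2)]
  calc _ ≤ 8 * (2 * n * exp (-L) + s * (2 * L)) + s * (16 * K ^ 2 + 4) +
        (n * (88 * K ^ 2 * (2 * weightCutoff K L) * √L) + 36 * K ^ 2 * 1) := by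
        have hα0 : 0 ≤ weightCutoff K L := (exp_pos _).le.trans hα_ge
        gcongr
    _ = 16 * s + 16 * (s * L) + (16 * K ^ 2 + 4) * s + 25344 * K ^ 3 * (s * L) + 36 * K ^ 2 := by
        rw [weightCutoff]
        linear_combination (16 + 25344 * K ^ 3 * L) * hnr +
          25344 * K ^ 3 * n * exp (-L) * sq_sqrt (by linarith : 0 ≤ L)
    _ ≤ 30000 * K ^ 3 * (s * L) := by
        have hsL : s ≤ s * L := le_mul_of_one_le_right (by linarith) hL1
        have hK3 : K ^ 2 ≤ K ^ 3 := pow_le_pow_right₀ hK (by norm_num)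
        have hKsL : K ^ 2 * s ≤ K ^ 3 * (s * L) := by gcongr
        have hsL3 : s * L ≤ K ^ 3 * (s * L) :=
          le_mul_of_one_le_left (by linarith) (hK1.trans hK3)
        have hKs : K ^ 2 ≤ K ^ 2 * s := le_mul_of_one_le_right (by linarith) hs
        linarith

end HasCauchyTails

/-! ### The lower limit for the prior weight -/

namespace HasCauchyTails

variable {γ : ℝ → ℝ} {K : ℝ} (h : HasCauchyTails γ K)
include h

lemma measureReal_slabPost_Iic_zero_le {x : ℝ} (hx : 0 < x) :
    (slabPost γ x).real (Iic 0) ≤ 8 * K ^ 2 / x ^ 2 := by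
  have := h.isProbabilityMeasure_slabPost x
  have hsubset : Iic 0 ⊆ {u | x ^ 2 ≤ (u - x) ^ 2} := fun u (hu : u ≤ 0) ↦ by
    rw [mem_ofPred_eq]
    nlinarith
  rw [le_div_iff₀' (pow_pos hx 2)]
  calc x ^ 2 * (slabPost γ x).real (Iic 0)
      ≤ x ^ 2 * (slabPost γ x).real {u | x ^ 2 ≤ (u - x) ^ 2} :=
        mul_le_mul_of_nonneg_left (measureReal_mono hsubset) (sq_nonneg x)
    _ ≤ ∫ u, (u - x) ^ 2 ∂slabPost γ x :=
        mul_meas_ge_le_integral_of_nonneg (.of_forall fun u ↦ sq_nonneg _)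
          (h.integrable_sq_slabPost x x) _
    _ ≤ 8 * K ^ 2 := h.integral_sub_sq_slabPost_le x

lemma one_fourth_le_one_sub_aWt {α x : ℝ} (hα : α ∈ Icc 0 1) (hx : 0 < x)
    (hxK : 32 * K ^ 2 ≤ x ^ 2) (hmed : medianZero γ α x) : 1 / 4 ≤ 1 - aWt γ α x := by
  have := h.isProbabilityMeasure_slabPost x
  have hg := h.conv_pos x
  obtain ⟨ha0, ha1⟩ := aWt_mem_Icc hα hg
  have hslab : (slabPost γ x).real (Iic 0) ≤ 1 / 4 :=
    (h.measureReal_slabPost_Iic_zero_le hx).trans <| by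
      rw [div_le_iff₀ (pow_pos hx 2)]
      linarith
  have hhalf : 2⁻¹ ≤ (coordPost γ α x).real (Iic 0) := by
    have := isProbabilityMeasure_coordPost h.measurable hg h.nonneg hα
    simpa [measureReal_def] using ENNReal.toReal_mono (measure_ne_top _ _) hmed.1
  have hfinite (a : ℝ) (μ : Measure ℝ) [IsProbabilityMeasure μ] :
      (ENNReal.ofReal a • μ) (Iic 0) ≠ ⊤ :=
    ENNReal.mul_ne_top ENNReal.ofReal_ne_top (measure_ne_top _ _)
  rw [coordPost_eq h.measurable hg hα, measureReal_add_apply (hfinite _ _) (hfinite _ _),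
    measureReal_ennreal_smul_apply, measureReal_ennreal_smul_apply,
    ENNReal.toReal_ofReal (sub_nonneg.2 ha1), ENNReal.toReal_ofReal ha0,
    measureReal_def (Measure.dirac 0), Measure.dirac_apply_of_mem (by simp),
    ENNReal.toReal_one] at hhalf
  nlinarith

lemma le_of_medianZero {α x : ℝ} (hα : α ∈ Icc 0 1) (hx : 0 < x)
    (hxK : 32 * K ^ 2 ≤ x ^ 2) (hmed : medianZero γ α x) :
    α ≤ 3 * K * (2 + x ^ 2) * exp (-x ^ 2 / 2) := by
  have hK := h.const_pos
  have hg := h.conv_pos x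
  have hweight := h.one_fourth_le_one_sub_aWt hα hx hxK hmed
  rw [one_sub_aWt hα hg, le_div_iff₀ (margDen_pos hα hg), margDen] at hweight
  have hφ : α * conv γ x ≤ 3 * exp (-x ^ 2 / 2) := by
    nlinarith [phi_le_exp x, mul_nonneg hα.1 (phi_pos x).le]
  have hdiv : α / (K * (2 + x ^ 2)) ≤ 3 * exp (-x ^ 2 / 2) :=
    (mul_le_mul_of_nonneg_left (h.inv_le_conv x) hα.1).trans hφ
  rw [div_le_iff₀ (by positivity)] at hdiv
  linarith

lemma le_log_sq_div_of_medianZero {n : ℕ} {α : ℝ} (hα : α ∈ Icc 0 1)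
    (hn : 16 * K ^ 2 ≤ log n) (hmed : medianZero γ α √(2 * log n)) : α ≤ log n ^ 2 / n := by
  have hK := h.one_le_const
  have hlog : 0 < log n := by nlinarith
  have hn0 : (0 : ℝ) < n := by
    rw [Nat.cast_pos, Nat.pos_iff_ne_zero]
    rintro rfl
    simp at hlog
  have hx2 : √(2 * log n) ^ 2 = 2 * log n := sq_sqrt (by linarith)
  have hle := h.le_of_medianZero hα (sqrt_pos.2 (by linarith)) (by linarith) hmed
  rw [hx2, show -(2 * log n) / 2 = -log n by ring, exp_neg, exp_log hn0] at hle
  calc α ≤ 3 * K * (2 + 2 * log n) / n := hle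
    _ ≤ log n ^ 2 / n := by
        gcongr
        nlinarith

/-! ### The optimal rate -/

lemma postRisk_le_log_cube {n s : ℕ} (hlog1 : 1 ≤ log n)
    (hn : (576 * K) ^ 2 * (2 * log n ^ 2) ≤ n) (hs : (s : ℝ) ≤ log n ^ 2) {αn : ℝ}
    (hαn : αn ∈ Icc 0 (log n ^ 2 / n)) {hahat : (Fin n → ℝ) → ℝ} (hMLE : IsMMLE γ αn hahat)
    {θ : Fin n → ℝ} (hθ : θ ∈ ell0 n s) :
    postRisk γ hahat θ ≤ 60000 * K ^ 3 * log n ^ 3 := by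
  have hK := h.one_le_const
  have hK2 : 1 ≤ K ^ 2 := one_le_pow₀ hK
  have hsq1 : 1 ≤ log n ^ 2 := one_le_pow₀ hlog1
  set m := ⌈log n ^ 2⌉₊
  have hm_ge : log n ^ 2 ≤ m := Nat.le_ceil _
  have hm_le : (m : ℝ) ≤ 2 * log n ^ 2 := by linarith [Nat.ceil_lt_add_one (sq_nonneg (log n))]
  have hm1 : 1 ≤ (m : ℝ) := hsq1.trans hm_ge
  have hn0 : (0 : ℝ) < n := (by positivity : 0 < (576 * K) ^ 2 * (2 * log n ^ 2)).trans_le hn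
  have hmn : (576 * K) ^ 2 * m ≤ n := (mul_le_mul_of_nonneg_left hm_le (sq_nonneg _)).trans hn
  have hsm : s ≤ m := by exact_mod_cast hs.trans hm_ge
  have hαm : αn ∈ Icc 0 ((m : ℝ) / n) := ⟨hαn.1, hαn.2.trans (by gcongr)⟩
  calc postRisk γ hahat θ ≤ 30000 * K ^ 3 * (m * log (n / m)) :=
        h.postRisk_le (by exact_mod_cast hm1) hmn (by nlinarith) hαm hMLE
          (le_trans (α := ℕ) hθ hsm)
    _ ≤ 30000 * K ^ 3 * (2 * log n ^ 2 * log n) := by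
        have : (n : ℝ) / m ≤ n := div_le_self hn0.le hm1
        have : 0 ≤ log (n / m) := log_nonneg ((one_le_div (by linarith)).2 (by nlinarith))
        gcongr
    _ = 60000 * K ^ 3 * log n ^ 3 := by ring

end HasCauchyTails

lemma eventually_le_log_and_mul_log_sq_le (a b : ℝ) :
    ∀ᶠ n : ℕ in atTop, a ≤ log n ∧ b * log n ^ 2 ≤ n := by
  have hlog : ∀ᶠ x : ℝ in atTop, a ≤ log x := tendsto_log_atTop.eventually_ge_atTop a
  have hsq : ∀ᶠ x : ℝ in atTop, b * log x ^ 2 ≤ x := by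
    filter_upwards [(isLittleO_pow_log_id_atTop (n := 2)).const_mul_left b |>.bound one_pos,
      eventually_ge_atTop 0] with x hx hx0
    rw [one_mul, id, norm_of_nonneg hx0] at hx
    exact (le_norm_self _).trans hx
  exact tendsto_natCast_atTop_atTop.eventually (hlog.and hsq)

theorem cauchy_slab_optimal_rate_general {γ : ℝ → ℝ} {K : ℝ} (h : HasCauchyTails γ K) :
    ∃ C > (0 : ℝ), ∃ N0 : ℕ, 0 < N0 ∧ ∃ c0 > (0 : ℝ),
      ∀ n : ℕ, N0 ≤ n → ∀ s : ℕ, (s : ℝ) ≤ c0 * n →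
      ∀ αn : ℝ, 0 ≤ αn → medianZero γ αn √(2 * log n) →
      ∀ hahat : (Fin n → ℝ) → ℝ, IsMMLE γ αn hahat → ∀ θ ∈ ell0 n s,
        (log n ^ 2 ≤ (s : ℝ) → postRisk γ hahat θ ≤ C * (2 * s * log ((n : ℝ) / s))) ∧
          postRisk γ hahat θ ≤ C * (2 * s * log ((n : ℝ) / s)) + C * log n ^ 3 := by
  have hK := h.one_le_const
  have hK2 : 1 ≤ K ^ 2 := one_le_pow₀ hK
  obtain ⟨N, hN⟩ := eventually_atTop.1
    (eventually_le_log_and_mul_log_sq_le (16 * K ^ 2) ((576 * K) ^ 2 * 2))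
  refine ⟨60000 * K ^ 3, by positivity, N + 1, N.succ_pos, ((576 * K) ^ 2)⁻¹, by positivity,
    fun n hn s hs αn hαn0 hmed hahat hMLE θ hθ ↦ ?_⟩
  obtain ⟨hlogK, hlogn⟩ := hN n (by lia)
  have hlog1 : 1 ≤ log n := by nlinarith
  have hsq : log n ≤ log n ^ 2 := le_self_pow₀ hlog1 two_ne_zero
  have hαn1 : αn ≤ 1 := (hMLE.2 0).1.1.trans (hMLE.2 0).1.2
  have hαn : αn ≤ log n ^ 2 / n := h.le_log_sq_div_of_medianZero ⟨hαn0, hαn1⟩ hlogK hmed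
  have hsn : (576 * K) ^ 2 * s ≤ (n : ℝ) := by
    rwa [← div_eq_inv_mul, le_div_iff₀' (by positivity)] at hs
  have hrate : 0 ≤ s * log ((n : ℝ) / s) := by
    rcases s.eq_zero_or_pos with rfl | hs0
    · simp
    · have hs0 : (0 : ℝ) < s := by exact_mod_cast hs0
      exact mul_nonneg hs0.le (log_nonneg ((one_le_div hs0).2 (by nlinarith)))
  have hdense (hs' : log n ^ 2 ≤ (s : ℝ)) :
      postRisk γ hahat θ ≤ 60000 * K ^ 3 * (2 * s * log ((n : ℝ) / s)) := by
    have hs1 : 1 ≤ s := by exact_mod_cast (hlog1.trans hsq).trans hs'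
    have := h.postRisk_le hs1 hsn (hsq.trans hs') ⟨hαn0, hαn.trans (by gcongr)⟩ hMLE hθ
    nlinarith [mul_nonneg (by positivity : 0 ≤ K ^ 3) hrate]
  refine ⟨hdense, ?_⟩
  have hC : 0 ≤ 60000 * K ^ 3 := by positivity
  rcases le_total (log n ^ 2) (s : ℝ) with hs' | hs'
  · exact (hdense hs').trans (le_add_of_nonneg_right (by positivity))
  · exact (h.postRisk_le_log_cube hlog1 (by linarith) hs' ⟨hαn0, hαn⟩ hMLE hθ).trans
      (le_add_of_nonneg_left (mul_nonneg hC (by linarith)))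

/-- Theorem 3: optimal rate for the EB spike and Cauchy slab.
There exist `C, N₀, c₀, c₁ > 0` such that for `n ≥ N₀` and
`c₁ log² n ≤ s ≤ c₀ n` the complete empirical Bayes posterior squared
`L²`-moment is at most `C ⬝ 2 s log(n/s)` uniformly over `ℓ₀[s]`; assuming only
`s ≤ c₀ n` the bound `C ⬝ 2 s log(n/s) + C log³ n` holds. -/
theorem cauchy_slab_optimal_rate :
    ∃ C > (0 : ℝ), ∃ N0 : ℕ, 0 < N0 ∧ ∃ c0 > (0 : ℝ), ∃ c1 > (0 : ℝ),
      ∀ n : ℕ, N0 ≤ n → ∀ s : ℕ, (s : ℝ) ≤ c0 * n →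
      ∀ t : ℝ → ℝ, IsThreshold cauchyDen t →
      ∀ αn : ℝ, αn ∈ Set.Ioo (0 : ℝ) 1 → t αn = Real.sqrt (2 * Real.log n) →
      ∀ hahat : (Fin n → ℝ) → ℝ, IsMMLE cauchyDen αn hahat →
      ∀ θ0 ∈ ell0 n s,
        (c1 * (Real.log n) ^ 2 ≤ (s : ℝ) →
          postRisk cauchyDen hahat θ0 ≤ C * (2 * s * Real.log ((n : ℝ) / s))) ∧
        postRisk cauchyDen hahat θ0 ≤
          C * (2 * s * Real.log ((n : ℝ) / s)) + C * (Real.log n) ^ 3 := by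
  obtain ⟨C, hC, N0, hN0, c0, hc0, hrate⟩ :=
    cauchy_slab_optimal_rate_general hasCauchyTails_cauchyDen
  refine ⟨C, hC, N0, hN0, c0, hc0, 1, one_pos, fun n hn s hs t ht αn hαn htn hahat hMLE θ0 hθ0 ↦ ?_⟩
  rw [one_mul]
  exact hrate n hn s hs αn hαn.1.le
    (((ht αn hαn).2 _).2 ((abs_of_nonneg (sqrt_nonneg _)).trans_le htn.ge)) hahat hMLE θ0 hθ0

end
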